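/- arXiv:1106.6079 — 3 statements merged into one kernel-verified Lean document; each statement's English description precedes it below -/
import Mathlib

section
/- Assume k is infinite. Then the value semigroup S(O) = {v(z) | z ∈ O∖{0}} is symmetric if and only if O is Gorenstein. (Corollary 3.9) -/
/-- The dimension over `k` of the quotient `A / B` of two `O`-submodules of `K`,
viewed as `k`-vector spaces. -/
noncomputable def qdim (k : Type) {O K : Type} [Field k] [CommRing O] [CommRing K]
    [Algebra k O] [Algebra O K] [Algebra k K] [IsScalarTower k O K]
    (A B : Submodule O K) : ℕ :=
  Module.finrank k
    (↥(Submodule.restrictScalars k A) ⧸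
      (Submodule.comap (Submodule.restrictScalars k A).subtype (Submodule.restrictScalars k B)))

/-- `b` is a fractional ideal of `O` in `K`: a nonzero `O`-submodule of `K` admitting a
regular denominator in `O`. -/
def IsFracIdeal {O K : Type} [CommRing O] [CommRing K] [Algebra O K]
    (b : Submodule O K) : Prop :=
  b ≠ ⊥ ∧ ∃ x ∈ nonZeroDivisors O, ∀ z ∈ b, x • z ∈ (1 : Submodule O K)

/-- The `i`-th component of the value vector `v(a)` of a (fractional) ideal `a`:
the minimum of `v i` over the nonzero elements of `a`. -/
noncomputable def idealVal {O K : Type} [CommRing O] [CommRing K] [Algebra O K] {r : ℕ}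
    (v : Fin r → K → ℤ) (a : Submodule O K) (i : Fin r) : ℤ :=
  sInf {n : ℤ | ∃ z ∈ a, z ≠ 0 ∧ v i z = n}

/-- `γ^b := v(b : Ō) - v(b·Ō)`. -/
noncomputable def gammaB {O K : Type} [CommRing O] [CommRing K] [Algebra O K] {r : ℕ}
    (v : Fin r → K → ℤ) (Obar b : Submodule O K) : Fin r → ℤ :=
  fun i => idealVal v (b / Obar) i - idealVal v (b * Obar) i

/-- `c` is a canonical ideal of `O`: a fractional ideal with `a = c : (c : a)` for every
fractional ideal `a`. -/
def IsCanonicalIdeal {O K : Type} [CommRing O] [CommRing K] [Algebra O K]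
    (c : Submodule O K) : Prop :=
  IsFracIdeal c ∧ ∀ a : Submodule O K, IsFracIdeal a → a = c / (c / a)

/-- `b` is self-dual: `b = c : b` for some canonical ideal `c`. -/
def IsSelfDual {O K : Type} [CommRing O] [CommRing K] [Algebra O K]
    (b : Submodule O K) : Prop :=
  ∃ c : Submodule O K, IsCanonicalIdeal c ∧ b = c / b

/-- The value set `S(b) = { v(z) - v(b·Ō) | z ∈ b \ {0} }`. -/
def Sset {O K : Type} [CommRing O] [CommRing K] [Algebra O K] {r : ℕ}
    (v : Fin r → K → ℤ) (Obar b : Submodule O K) : Set (Fin r → ℤ) :=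
  {w | ∃ z ∈ b, z ≠ 0 ∧ w = fun i => v i z - idealVal v (b * Obar) i}

/-- `Δ(n) = Δ_1(n) ∪ ⋯ ∪ Δ_r(n)` for a subset `S ⊆ ℤ^r`. -/
def Delta {r : ℕ} (S : Set (Fin r → ℤ)) (n : Fin r → ℤ) : Set (Fin r → ℤ) :=
  {σ | σ ∈ S ∧ ∃ i, σ i = n i ∧ ∀ j, j ≠ i → n j < σ j}

/-- `S ⊆ ℤ^r` is symmetric if there is `τ` with `w ∈ S ↔ Δ(τ - w) = ∅` for all `w`. -/
def IsSymmetricSet {r : ℕ} (S : Set (Fin r → ℤ)) : Prop :=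
  ∃ τ : Fin r → ℤ, ∀ w : Fin r → ℤ, w ∈ S ↔ Delta S (τ - w) = ∅

/-- A family `v` of independent discrete valuations on a field `K`, trivial on `k`, all of whose
residue fields are equal to `k`. -/
structure RationalValuations (k : Type*) {K : Type*} [Field k] [Field K] [Algebra k K] {r : ℕ}
    (v : Fin r → K → ℤ) : Prop where
  mul : ∀ (i : Fin r) (x y : K), x ≠ 0 → y ≠ 0 → v i (x * y) = v i x + v i y
  add : ∀ (i : Fin r) (x y : K), x ≠ 0 → y ≠ 0 → x + y ≠ 0 → min (v i x) (v i y) ≤ v i (x + y)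
  const : ∀ (i : Fin r) (c : k), c ≠ 0 → v i (algebraMap k K c) = 0
  residue : ∀ (i : Fin r) (x : K), x ≠ 0 → v i x = 0 →
    ∃ c : k, x - algebraMap k K c ≠ 0 → 0 < v i (x - algebraMap k K c)
  approx : ∀ (i : Fin r) (n : Fin r → ℤ), ∃ x : K, x ≠ 0 ∧ v i x = n i ∧ ∀ j, n j ≤ v j x

namespace RationalValuations

section General

variable {k K : Type*} [Field k] [Field K] [Algebra k K] {r : ℕ} {v : Fin r → K → ℤ}

/-- The elements of `K` with value vector at least `n`. -/
def ball (h : RationalValuations k v) (n : Fin r → ℤ) : Submodule k K where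
  carrier := {x | x ≠ 0 → ∀ i, n i ≤ v i x}
  zero_mem' := fun h0 => absurd rfl h0
  add_mem' := by
    intro x y hx hy hxy i
    by_cases hx0 : x = 0
    · subst hx0
      rw [zero_add] at hxy ⊢
      exact hy hxy i
    by_cases hy0 : y = 0
    · subst hy0
      rw [add_zero] at hxy ⊢
      exact hx hxy i
    exact (le_min (hx hx0 i) (hy hy0 i)).trans (h.add i x y hx0 hy0 hxy)
  smul_mem' := by
    intro c x hx hcx i
    have hc : c ≠ 0 := by rintro rfl; simp at hcx
    have hx0 : x ≠ 0 := by rintro rfl; simp at hcx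
    rw [Algebra.smul_def, h.mul i _ _ (by simpa using hc) hx0, h.const i c hc, zero_add]
    exact hx hx0 i

variable (h : RationalValuations k v)
include h

theorem ball_anti {m n : Fin r → ℤ} (hmn : m ≤ n) : h.ball n ≤ h.ball m :=
  fun _ hx hx0 i => (hmn i).trans (hx hx0 i)

theorem mul_mem_ball {m n : Fin r → ℤ} {x y : K} (hx : x ∈ h.ball m) (hy : y ∈ h.ball n) :
    x * y ∈ h.ball (m + n) := by
  intro hxy i
  have hx0 := left_ne_zero_of_mul hxy
  have hy0 := right_ne_zero_of_mul hxy
  rw [h.mul i x y hx0 hy0]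
  exact add_le_add (hx hx0 i) (hy hy0 i)

theorem val_one (i : Fin r) : v i 1 = 0 := by
  simpa using h.const i 1 one_ne_zero

theorem val_inv (i : Fin r) {x : K} (hx : x ≠ 0) : v i x⁻¹ = -v i x := by
  have := h.mul i x x⁻¹ hx (inv_ne_zero hx)
  rw [mul_inv_cancel₀ hx, h.val_one] at this
  linarith

/-- Subtracting a multiple of `y` raises the `i`-th value. -/
theorem exists_sub_smul_mem_ball (i : Fin r) {n : Fin r → ℤ} {x y : K} (hx : x ∈ h.ball n)
    (hy : y ∈ h.ball n) (hy0 : y ≠ 0) (hyi : v i y = n i) :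
    ∃ c : k, x - c • y ∈ h.ball (n + Pi.single i 1) := by
  have key : ∃ c : k, x - c • y ≠ 0 → n i < v i (x - c • y) := by
    by_cases hx0 : x = 0
    · exact ⟨0, fun H => absurd (by simp [hx0]) H⟩
    have hxi := hx hx0 i
    rcases hxi.lt_or_eq with hlt | heq
    · exact ⟨0, fun _ => by simpa using hlt⟩
    obtain ⟨c, hc⟩ := h.residue i (x * y⁻¹) (mul_ne_zero hx0 (inv_ne_zero hy0)) (by
      rw [h.mul i _ _ hx0 (inv_ne_zero hy0), h.val_inv i hy0]; omega)
    have hfac : x - c • y = (x * y⁻¹ - algebraMap k K c) * y := by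
      rw [Algebra.smul_def]; field_simp
    refine ⟨c, fun H => ?_⟩
    rw [hfac] at H ⊢
    rw [h.mul i _ _ (left_ne_zero_of_mul H) hy0]
    have := hc (left_ne_zero_of_mul H)
    omega
  obtain ⟨c, hc⟩ := key
  refine ⟨c, fun H j => ?_⟩
  have hn := (h.ball n).sub_mem hx ((h.ball n).smul_mem c hy) H j
  have := hc H
  by_cases hj : j = i
  · subst hj; simp; omega
  · simpa [Pi.single_eq_of_ne hj] using hn

theorem exists_mem_forall_val_eq [Infinite k] [NeZero r] (W : Submodule k K) (n : Fin r → ℤ)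
    (hW : ∀ i, ∃ z ∈ W, z ≠ 0 ∧ z ∈ h.ball n ∧ v i z = n i) :
    ∃ z ∈ W, z ≠ 0 ∧ ∀ i, v i z = n i := by
  let p : Fin r → Subspace k ↥(W ⊓ h.ball n) :=
    fun i => (h.ball (n + Pi.single i 1)).comap (W ⊓ h.ball n).subtype
  have hp : ⋃ i, (p i : Set ↥(W ⊓ h.ball n)) ≠ Set.univ := by
    intro hcov
    obtain ⟨i, hi⟩ := Subspace.exists_eq_top_of_iUnion_eq_univ hcov
    obtain ⟨z, hz, hz0, hzn, hzi⟩ := hW i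
    have : (⟨z, hz, hzn⟩ : ↥(W ⊓ h.ball n)) ∈ p i := by rw [hi]; trivial
    have := this hz0 i
    simp at this
    omega
  obtain ⟨⟨z, hzW, hzn⟩, hz⟩ := (Set.ne_univ_iff_exists_notMem _).1 hp
  have hz' : ∀ i, z ∉ h.ball (n + Pi.single i 1) := by simpa [p] using hz
  have hz0 : z ≠ 0 := by
    rintro rfl
    exact hz' 0 (Submodule.zero_mem _)
  refine ⟨z, hzW, hz0, fun i => ?_⟩
  by_contra hne
  refine hz' i fun _ j => ?_
  have hj := hzn hz0 j
  by_cases hji : j = i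
  · subst hji; simp; omega
  · simpa [Pi.single_eq_of_ne hji] using hj

theorem exists_forall_val_eq [Infinite k] [NeZero r] (n : Fin r → ℤ) :
    ∃ z : K, z ≠ 0 ∧ ∀ i, v i z = n i := by
  obtain ⟨z, -, hz⟩ := h.exists_mem_forall_val_eq ⊤ n fun i => by
    obtain ⟨x, hx0, hxi, hx⟩ := h.approx i n
    exact ⟨x, trivial, hx0, fun _ => hx, hxi⟩
  exact ⟨z, hz⟩

omit h in
/-- Descending induction on exponent vectors below `N`. -/
theorem descending_induction {P : (Fin r → ℤ) → Prop} {N : Fin r → ℤ} (base : ∀ n, N ≤ n → P n)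
    (step : ∀ n i, n i < N i → P (n + Pi.single i 1) → P n) (n : Fin r → ℤ) : P n := by
  induction hm : ∑ i, (N i - n i).toNat using Nat.strong_induction_on generalizing n with
  | _ m ih =>
    by_cases hn : N ≤ n
    · exact base n hn
    obtain ⟨i, hi⟩ : ∃ i, n i < N i := by simpa [Pi.le_def] using hn
    refine step n i hi (ih _ ?_ _ rfl)
    rw [← hm]
    refine Finset.sum_lt_sum (fun j _ => ?_) ⟨i, Finset.mem_univ i, by simp; omega⟩
    by_cases hj : j = i
    · subst hj; simp; omega
    · simp [Pi.single_eq_of_ne hj]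

/-- A space containing a ball and attaining all the values of `W` within `W` contains `W`. -/
theorem le_of_forall_val_eq {B W : Submodule k K} {N q : Fin r → ℤ} (hB : h.ball N ≤ B)
    (hW : W ≤ h.ball q)
    (hval : ∀ x ∈ W, x ≠ 0 → ∃ o ∈ B ⊓ W, o ≠ 0 ∧ ∀ i, v i o = v i x) : W ≤ B := by
  suffices H : W ⊓ h.ball q ≤ B from (le_inf le_rfl hW).trans H
  refine descending_induction (P := fun n => W ⊓ h.ball n ≤ B) (N := N)
    (fun n hn => inf_le_right.trans ((h.ball_anti hn).trans hB)) (fun n i hi ih => ?_) q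
  rintro x ⟨hxW, hxn⟩
  by_cases hx0 : x = 0
  · subst hx0; exact B.zero_mem
  obtain ⟨o, ⟨hoB, hoW⟩, ho0, ho⟩ := hval x hxW hx0
  by_cases hxi : v i x = n i
  · obtain ⟨c, hc⟩ := h.exists_sub_smul_mem_ball i hxn
      (fun _ j => (ho j).symm ▸ hxn hx0 j) ho0 ((ho i).trans hxi)
    have := B.add_mem (ih ⟨W.sub_mem hxW (W.smul_mem c hoW), hc⟩) (B.smul_mem c hoB)
    simpa using this
  · refine ih ⟨hxW, fun _ j => ?_⟩
    have := hxn hx0 j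
    by_cases hj : j = i
    · subst hj; simp; omega
    · simpa [Pi.single_eq_of_ne hj] using this

omit h in
/-- Over an infinite field, finitely many vectors outside a subspace are avoided by a single
functional vanishing on the subspace. -/
theorem exists_functional [Infinite k] {V ι : Type*} [AddCommGroup V] [Module k V] [Finite ι]
    (B : Submodule k V) (t : ι → V) (ht : ∀ i, t i ∉ B) :
    ∃ φ : V →ₗ[k] k, (∀ x ∈ B, φ x = 0) ∧ ∀ i, φ (t i) ≠ 0 := by
  let p : ι → Subspace k ↥B.dualAnnihilator := fun i =>
    LinearMap.ker ((Module.Dual.eval k V (t i)).comp B.dualAnnihilator.subtype)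
  have hp : ⋃ i, (p i : Set ↥B.dualAnnihilator) ≠ Set.univ := by
    intro hcov
    obtain ⟨i, hi⟩ := Subspace.exists_eq_top_of_iUnion_eq_univ hcov
    obtain ⟨f, hf, hfB⟩ := Submodule.exists_le_ker_of_notMem (ht i)
    have : (⟨f, (Submodule.mem_dualAnnihilator f).2 fun w hw => hfB hw⟩ :
        B.dualAnnihilator) ∈ p i := by rw [hi]; trivial
    exact hf this
  obtain ⟨⟨φ, hφ⟩, hφt⟩ := (Set.ne_univ_iff_exists_notMem _).1 hp
  refine ⟨φ, (Submodule.mem_dualAnnihilator φ).1 hφ, ?_⟩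
  simpa [p] using hφt

/-- Functionals vanishing on a ball `ball γ` and on no larger ball. -/
def IsDualizing (γ : Fin r → ℤ) (φ : K →ₗ[k] k) : Prop :=
  (∀ x ∈ h.ball γ, φ x = 0) ∧
    ∀ i x, x ≠ 0 → x ∈ h.ball (γ - Pi.single i 1) → v i x = γ i - 1 → φ x ≠ 0

theorem isDualizing_of_forall_ne_zero {γ : Fin r → ℤ} {φ : K →ₗ[k] k}
    (hφ : ∀ x ∈ h.ball γ, φ x = 0) (t : Fin r → K)
    (ht : ∀ i, t i ∈ h.ball (γ - Pi.single i 1)) (hφt : ∀ i, φ (t i) ≠ 0) :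
    h.IsDualizing γ φ := by
  refine ⟨hφ, fun i x hx0 hx hxi hφx => hφt i ?_⟩
  obtain ⟨c, hc⟩ := h.exists_sub_smul_mem_ball i (ht i) hx hx0 (by simp [hxi])
  have := hφ _ (by simpa using hc)
  simpa [hφx, sub_eq_zero] using this

/-- Every functional vanishing on a ball is represented on any other ball by `φ`. -/
theorem exists_represent [Infinite k] [NeZero r] {γ : Fin r → ℤ} {φ : K →ₗ[k] k}
    (hφ : h.IsDualizing γ φ) (q p : Fin r → ℤ) (ψ : K →ₗ[k] k) (hψ : ∀ x ∈ h.ball p, ψ x = 0) :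
    ∃ x : K, ∀ y ∈ h.ball q, ψ y = φ (x * y) := by
  have H := descending_induction (N := -q) (P := fun n => ∀ ψ : K →ₗ[k] k, (∀ x ∈ h.ball (-n), ψ x = 0) →
    ∃ x : K, ∀ y ∈ h.ball q, ψ y = φ (x * y)) ?_ ?_ (-p) ψ (by simpa using hψ)
  · exact H
  · intro n hn ψ hψ
    exact ⟨0, fun y hy => by simpa using hψ y (h.ball_anti (neg_le.1 hn) hy)⟩
  · intro n i _ ih ψ hψ
    obtain ⟨y, hy0, hy⟩ := h.exists_forall_val_eq (-n - Pi.single i 1)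
    obtain ⟨x, hx0, hx⟩ := h.exists_forall_val_eq (γ + n)
    have hyb : y ∈ h.ball (-(n + Pi.single i 1)) :=
      fun _ j => by rw [hy j]; simp; omega
    have hxb : x ∈ h.ball (γ + n) := fun _ j => (hx j).ge
    have hxy : φ (x * y) ≠ 0 := by
      refine hφ.2 i _ (mul_ne_zero hx0 hy0) (fun _ j => ?_) ?_
      · rw [h.mul j x y hx0 hy0, hx, hy]; simp; omega
      · rw [h.mul i x y hx0 hy0, hx, hy]; simp; omega
    let c := ψ y / φ (x * y)
    obtain ⟨x', hx'⟩ := ih (ψ - c • φ.comp (LinearMap.mulLeft k x)) fun z hz => by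
      obtain ⟨a, ha⟩ := h.exists_sub_smul_mem_ball i hz hyb hy0 (by rw [hy]; simp; omega)
      have ha' : z - a • y ∈ h.ball (-n) := by
        convert ha using 2; abel
      have h1 := hψ _ ha'
      have h2 := hφ.1 _ (by simpa using h.mul_mem_ball hxb ha' )
      rw [map_sub, map_smul, sub_eq_zero] at h1
      rw [mul_sub, mul_smul_comm, map_sub, map_smul, sub_eq_zero] at h2
      simp [h1, h2, c]
      field_simp
      simp
    refine ⟨x' + c • x, fun w hw => ?_⟩
    have := hx' w hw
    simp [sub_eq_iff_eq_add] at this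
    simp [this, add_mul]

theorem mem_ball_of_forall_map_mul_eq_zero [Infinite k] [NeZero r] {γ : Fin r → ℤ} {φ : K →ₗ[k] k}
    (hφ : h.IsDualizing γ φ) (n : Fin r → ℤ) {x : K} (hx : ∀ y ∈ h.ball n, φ (x * y) = 0) :
    x ∈ h.ball (γ - n) := by
  intro hx0 i
  by_contra hlt
  simp only [Pi.sub_apply, not_le] at hlt
  obtain ⟨y, hy0, hy⟩ := h.exists_forall_val_eq
    (Function.update (fun j => max (n j) (γ j - v j x)) i (γ i - 1 - v i x))
  refine hφ.2 i (x * y) (mul_ne_zero hx0 hy0) (fun _ j => ?_) ?_ (hx y fun _ j => ?_)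
  · rw [h.mul j x y hx0 hy0, hy]
    by_cases hj : j = i
    · subst hj; simp
    · simp [hj]; omega
  · rw [h.mul i x y hx0 hy0, hy]; simp
  · rw [hy]
    by_cases hj : j = i
    · subst hj; simp; omega
    · simp [hj]

section Order

variable {O : Type*} [CommRing O] [Algebra k O] [Algebra O K] [IsScalarTower k O K]

/-- A submodule lying between two balls equals its double orthogonal complement under `φ`. -/
theorem mem_of_forall_orthogonal [Infinite k] [NeZero r] {γ : Fin r → ℤ} {φ : K →ₗ[k] k}
    (hφ : h.IsDualizing γ φ) {a : Submodule O K} {p q : Fin r → ℤ}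
    (hp : h.ball p ≤ a.restrictScalars k) (hq : a.restrictScalars k ≤ h.ball q) {z : K}
    (hz : ∀ x, (∀ y ∈ a, φ (x * y) = 0) → φ (x * z) = 0) : z ∈ a := by
  by_contra hza
  obtain ⟨ψ, hψz, hψ⟩ := Submodule.exists_le_ker_of_notMem (p := a.restrictScalars k) hza
  obtain ⟨x, hx⟩ := h.exists_represent hφ (q ⊓ fun i => v i z) p ψ fun y hy => hψ (hp hy)
  refine hψz ?_
  rw [hx z fun _ i => inf_le_right]
  refine hz x fun y hy => ?_
  rw [← hx y (h.ball_anti inf_le_left (hq hy))]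
  exact hψ hy

/-- The conductor of `O` in `ball 0` is a ball. -/
theorem exists_conductor [Infinite k] [NeZero r] {N : Fin r → ℤ}
    (hB : (1 : Submodule O K).restrictScalars k ≤ h.ball 0)
    (hN : h.ball N ≤ (1 : Submodule O K).restrictScalars k) :
    ∃ γ : Fin r → ℤ, h.ball γ ≤ (1 : Submodule O K).restrictScalars k ∧
      ∀ x : K, (∀ y ∈ h.ball 0, x * y ∈ (1 : Submodule O K)) → x ∈ h.ball γ := by
  let C : Submodule k K :=
    { carrier := {x | ∀ y ∈ h.ball 0, x * y ∈ (1 : Submodule O K).restrictScalars k}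
      zero_mem' := fun y _ => by simp
      add_mem' := fun ha hb y hy => by rw [add_mul]; exact Submodule.add_mem _ (ha y hy) (hb y hy)
      smul_mem' := fun c x hx y hy => by
        rw [smul_mul_assoc]; exact Submodule.smul_mem _ c (hx y hy) }
  have h1 : (1 : K) ∈ h.ball 0 := fun _ i => (h.val_one i).ge
  have hmin : ∀ i, ∃ m : ℤ, (∃ z ∈ C, z ≠ 0 ∧ v i z = m) ∧
      ∀ m', (∃ z ∈ C, z ≠ 0 ∧ v i z = m') → m ≤ m' := by
    intro i
    refine Int.exists_least_of_bdd ⟨0, ?_⟩ ?_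
    · rintro _ ⟨z, hz, hz0, rfl⟩
      exact hB (by simpa using hz 1 h1) hz0 i
    · obtain ⟨z, hz0, hz⟩ := h.exists_forall_val_eq N
      refine ⟨_, z, fun y hy => hN ?_, hz0, rfl⟩
      simpa using h.mul_mem_ball (m := N) (fun _ j => (hz j).ge) hy
  choose γ hγ hγmin using hmin
  have hCγ : C ≤ h.ball γ := fun x hx hx0 i => hγmin i _ ⟨x, hx, hx0, rfl⟩
  obtain ⟨z, hzC, hz0, hz⟩ := h.exists_mem_forall_val_eq C γ fun i => by
    obtain ⟨z, hzC, hz0, hz⟩ := hγ i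
    exact ⟨z, hzC, hz0, hCγ hzC, hz⟩
  refine ⟨γ, fun x hx => ?_, fun x hx => hCγ hx⟩
  have hzi : z⁻¹ ∈ h.ball (-γ) := fun _ i => by rw [h.val_inv i hz0, hz]; rfl
  have := hzC (x * z⁻¹) (by simpa using h.mul_mem_ball hx hzi)
  rwa [mul_left_comm, mul_inv_cancel₀ hz0, mul_one] at this

omit [Algebra k O] [IsScalarTower k O K] h in
theorem mul_mem_one {x y : K} (hx : x ∈ (1 : Submodule O K)) (hy : y ∈ (1 : Submodule O K)) :
    x * y ∈ (1 : Submodule O K) := by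
  simpa using Submodule.mul_mem_mul hx hy

omit [Algebra k O] [IsScalarTower k O K] h in
theorem mul_mem_of_mem_one {a : Submodule O K} {x y : K} (hx : x ∈ a)
    (hy : y ∈ (1 : Submodule O K)) : x * y ∈ a := by
  simpa using Submodule.mul_mem_mul hx hy

end Order

end General

section Main

variable {k O K : Type} [Field k] [Infinite k] [CommRing O] [IsDomain O] [Algebra k O] [Field K]
  [Algebra O K] [IsFractionRing O K] [Algebra k K] [IsScalarTower k O K] {r : ℕ} [NeZero r]
  {v : Fin r → K → ℤ} (h : RationalValuations k v)
include h

omit [Infinite k] [NeZero r] in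
theorem exists_balls {N : Fin r → ℤ} (hB : (1 : Submodule O K).restrictScalars k ≤ h.ball 0)
    (hN : h.ball N ≤ (1 : Submodule O K).restrictScalars k) {a : Submodule O K}
    (ha : IsFracIdeal a) :
    ∃ p q, h.ball p ≤ a.restrictScalars k ∧ a.restrictScalars k ≤ h.ball q := by
  obtain ⟨hne, d, hd, hda⟩ := ha
  obtain ⟨y, hya, hy0⟩ := Submodule.exists_mem_ne_zero_of_ne_bot hne
  have hd0 : algebraMap O K d ≠ 0 := by
    simpa using nonZeroDivisors.ne_zero hd
  refine ⟨N + fun i => v i y, fun i => -v i (algebraMap O K d), fun x hx => ?_,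
    fun x hx hx0 i => ?_⟩
  · have hyi : y⁻¹ ∈ h.ball (-fun i => v i y) := fun _ i => (h.val_inv i hy0).ge
    have := mul_mem_of_mem_one hya (hN (by simpa using h.mul_mem_ball hx hyi))
    rwa [mul_left_comm, mul_inv_cancel₀ hy0, mul_one] at this
  · have := hB (hda x hx) (by rw [Algebra.smul_def]; exact mul_ne_zero hd0 hx0) i
    rw [Algebra.smul_def, h.mul i _ _ hd0 hx0] at this
    simp at this
    change -v i _ ≤ _
    omega

theorem reflexive_of_isSymmetricSet {N : Fin r → ℤ}
    (hB : (1 : Submodule O K).restrictScalars k ≤ h.ball 0)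
    (hN : h.ball N ≤ (1 : Submodule O K).restrictScalars k)
    (hS : IsSymmetricSet
      {w : Fin r → ℤ | ∃ z : K, z ∈ (1 : Submodule O K) ∧ z ≠ 0 ∧ w = fun i => v i z})
    (a : Submodule O K) (ha : IsFracIdeal a) :
    a = (1 : Submodule O K) / ((1 : Submodule O K) / a) := by
  obtain ⟨τ, hτ⟩ := hS
  set S := {w : Fin r → ℤ | ∃ z : K, z ∈ (1 : Submodule O K) ∧ z ≠ 0 ∧ w = fun i => v i z}
  have hS0 : ∀ s ∈ S, ∀ i, 0 ≤ s i := by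
    rintro _ ⟨z, hz, hz0, rfl⟩ i
    exact hB hz hz0 i
  have hlarge : h.ball (τ + 1) ≤ (1 : Submodule O K).restrictScalars k := by
    refine h.le_of_forall_val_eq hN le_rfl fun x hx hx0 => ?_
    have : (fun i => v i x) ∈ S := by
      rw [hτ, Set.eq_empty_iff_forall_notMem]
      rintro σ ⟨hσ, i, hi, -⟩
      have h1 := hS0 σ hσ i
      have h2 := hx hx0 i
      simp at hi h2
      omega
    obtain ⟨o, ho, ho0, hov⟩ := this
    exact ⟨o, ⟨ho, fun _ i => congrFun hov i ▸ hx hx0 i⟩, ho0, fun i => (congrFun hov i).symm⟩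
  have hΔ : Delta S τ = ∅ := by
    have := (hτ 0).1 ⟨1, Submodule.one_le.1 le_rfl, one_ne_zero, funext fun i => (h.val_one i).symm⟩
    simpa using this
  choose t ht0 ht using fun i : Fin r => h.exists_forall_val_eq (τ + 1 - Pi.single i 1)
  have htO : ∀ i, t i ∉ (1 : Submodule O K).restrictScalars k := by
    intro i hti
    refine Set.eq_empty_iff_forall_notMem.1 hΔ (fun j => v j (t i))
      ⟨⟨t i, hti, ht0 i, rfl⟩, i, by simp [ht], fun j hj => ?_⟩
    simp [ht, hj]
  obtain ⟨φ, hφO, hφt⟩ := exists_functional _ t htO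
  have hφ : h.IsDualizing (τ + 1) φ :=
    h.isDualizing_of_forall_ne_zero (fun x hx => hφO x (hlarge hx)) t
      (fun i _ j => (ht i j).ge) hφt
  let W : Submodule k K :=
    { carrier := {x | ∀ y ∈ (1 : Submodule O K), φ (x * y) = 0}
      zero_mem' := fun y _ => by simp
      add_mem' := fun ha hb y hy => by rw [add_mul, map_add, ha y hy, hb y hy, add_zero]
      smul_mem' := fun c x hx y hy => by rw [smul_mul_assoc, map_smul, hx y hy, smul_zero] }
  have hOW : (1 : Submodule O K).restrictScalars k ≤ W :=
    fun x hx y hy => hφO _ (mul_mem_one hx hy)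
  have hWO : W ≤ (1 : Submodule O K).restrictScalars k := by
    refine h.le_of_forall_val_eq hN (q := τ + 1 - N)
      (fun x hx => h.mem_ball_of_forall_map_mul_eq_zero hφ N fun y hy => hx y (hN hy))
      fun x hx hx0 => ?_
    have : (fun i => v i x) ∈ S := by
      rw [hτ, Set.eq_empty_iff_forall_notMem]
      rintro _ ⟨⟨z, hz, hz0, rfl⟩, i, hi, hj⟩
      refine hφ.2 i (x * z) (mul_ne_zero hx0 hz0) (fun _ j => ?_) ?_ (hx z hz)
      · rw [h.mul j x z hx0 hz0]
        by_cases hji : j = i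
        · subst hji
          simp at hi ⊢
          omega
        · have := hj j hji
          simp [hji] at this ⊢
          omega
      · rw [h.mul i x z hx0 hz0]
        simp at hi ⊢
        omega
    obtain ⟨o, ho, ho0, hov⟩ := this
    exact ⟨o, ⟨ho, hOW ho⟩, ho0, fun i => (congrFun hov i).symm⟩
  obtain ⟨p, q, hp, hq⟩ := h.exists_balls hB hN ha
  refine le_antisymm (Submodule.le_div_iff_mul_le.2 ?_) fun z hz => ?_
  · rw [mul_comm]
    exact Submodule.le_div_iff_mul_le.1 le_rfl
  · refine h.mem_of_forall_orthogonal hφ hp hq fun x hx => hφO _ ?_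
    rw [mul_comm]
    refine Submodule.mem_div_iff_forall_mul_mem.1 hz x
      (Submodule.mem_div_iff_forall_mul_mem.2 fun y hy => hWO fun w hw => ?_)
    rw [mul_assoc]
    exact hx _ (mul_mem_of_mem_one hy hw)

omit [IsFractionRing O K] in
theorem isSymmetricSet_of_reflexive {N : Fin r → ℤ}
    (hB : (1 : Submodule O K).restrictScalars k ≤ h.ball 0)
    (hN : h.ball N ≤ (1 : Submodule O K).restrictScalars k)
    (hG : ∀ a : Submodule O K, IsFracIdeal a →
      a = (1 : Submodule O K) / ((1 : Submodule O K) / a)) :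
    IsSymmetricSet
      {w : Fin r → ℤ | ∃ z : K, z ∈ (1 : Submodule O K) ∧ z ≠ 0 ∧ w = fun i => v i z} := by
  obtain ⟨γ, hγ, hγC⟩ := h.exists_conductor hB hN
  have h1O : (1 : K) ∈ (1 : Submodule O K) := Submodule.one_le.1 le_rfl
  refine ⟨γ - 1, fun w => ⟨?_, fun hΔ => ?_⟩⟩
  · rintro ⟨z, hz, hz0, rfl⟩
    rw [Set.eq_empty_iff_forall_notMem]
    rintro _ ⟨⟨u, hu, hu0, rfl⟩, i, hi, hj⟩
    have hp0 := mul_ne_zero hz0 hu0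
    have hpi : v i (z * u) = γ i - 1 := by
      rw [h.mul i z u hz0 hu0]; simp at hi; omega
    have hpb : z * u ∈ h.ball (γ - Pi.single i 1) := by
      intro _ j
      by_cases hji : j = i
      · subst hji; simp [hpi]
      · have := hj j hji
        rw [h.mul j z u hz0 hu0]
        simp [hji] at this ⊢
        omega
    have hpC : z * u ∈ h.ball γ := hγC _ fun y hy => by
      obtain ⟨c, hc⟩ := h.exists_sub_smul_mem_ball i
        (by simpa using h.mul_mem_ball hpb hy) hpb hp0 (by simp [hpi])
      have := ((1 : Submodule O K).restrictScalars k).add_mem (hγ (by simpa using hc))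
        (Submodule.smul_mem _ c (mul_mem_one hz hu))
      simpa using this
    have := hpC hp0 i
    omega
  · suffices H : ∀ i, ∃ z ∈ (1 : Submodule O K).restrictScalars k,
        z ≠ 0 ∧ z ∈ h.ball w ∧ v i z = w i by
      obtain ⟨z, hz, hz0, hzw⟩ := h.exists_mem_forall_val_eq _ w H
      exact ⟨z, hz, hz0, funext fun i => (hzw i).symm⟩
    intro i
    by_contra! hno
    let b : Submodule O K :=
      { (h.ball (γ - w)).toAddSubmonoid with
        smul_mem' := fun o x hx => by
          rw [Algebra.smul_def]
          have ho : algebraMap O K o ∈ h.ball 0 := hB (Submodule.mem_one.2 ⟨o, rfl⟩)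
          simpa using h.mul_mem_ball ho hx }
    have hfrac : IsFracIdeal (1 ⊔ b) := by
      refine ⟨fun hbot => one_ne_zero (α := K) ?_, ?_⟩
      · rw [← Submodule.mem_bot O, ← hbot]
        exact Submodule.mem_sup_left h1O
      · obtain ⟨u, hu0, hu⟩ := h.exists_forall_val_eq (N ⊔ (N - (γ - w)))
        have huO : u ∈ (1 : Submodule O K) := hN fun _ j => (hu j).symm ▸ le_sup_left
        obtain ⟨o, rfl⟩ := Submodule.mem_one.1 huO
        refine ⟨o, mem_nonZeroDivisors_of_ne_zero (by rintro rfl; simp at hu0), fun z hz => ?_⟩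
        obtain ⟨x, hx, y, hy, rfl⟩ := Submodule.mem_sup.1 hz
        rw [smul_add]
        refine Submodule.add_mem _ (Submodule.smul_mem _ o hx) ?_
        rw [Algebra.smul_def]
        have huN : algebraMap O K o ∈ h.ball (N - (γ - w)) :=
          fun _ j => (hu j).symm ▸ le_sup_right
        have := h.mul_mem_ball huN hy
        exact hN (by simpa using this)
    obtain ⟨p, hp0, hp⟩ := h.exists_forall_val_eq (γ - w - Pi.single i 1)
    obtain ⟨u, hu0, hu⟩ := h.exists_forall_val_eq (γ - w)
    have hub : u ∈ h.ball (γ - w) := fun _ j => (hu j).ge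
    have hpmem : p ∈ 1 ⊔ b := by
      rw [hG _ hfrac]
      refine Submodule.mem_div_iff_forall_mul_mem.2 fun x hx => hγ ?_
      have hx' := Submodule.mem_div_iff_forall_mul_mem.1 hx
      have hxO : x ∈ (1 : Submodule O K) := by
        simpa using hx' 1 (Submodule.mem_sup_left h1O)
      have hxu : x * u ∈ h.ball γ := hγC _ fun y hy => by
        rw [mul_assoc]
        have huy : u * y ∈ h.ball (γ - w) := by simpa using h.mul_mem_ball hub hy
        exact hx' _ (Submodule.mem_sup_right huy)
      have hxw : x ∈ h.ball w := by
        intro hx0 j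
        have := hxu (mul_ne_zero hx0 hu0) j
        rw [h.mul j x u hx0 hu0, hu] at this
        simp at this
        omega
      have hxwi : x ∈ h.ball (w + Pi.single i 1) := by
        intro hx0 j
        have h1 := hno x hxO hx0 hxw
        have h2 := hxw hx0 j
        by_cases hj : j = i
        · subst hj; simp; omega
        · simpa [hj] using h2
      have hpb : p ∈ h.ball (γ - w - Pi.single i 1) := fun _ j => (hp j).ge
      have := h.mul_mem_ball hpb hxwi
      convert this using 2
      abel
    obtain ⟨o, ho, e, he, rfl⟩ := Submodule.mem_sup.1 hpmem
    have he' : e ∈ h.ball (γ - w) := he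
    have hone : o ∉ h.ball (γ - w) := by
      intro hob
      have := (h.ball (γ - w)).add_mem hob he' hp0 i
      rw [hp] at this
      simp at this
    have ho0 : o ≠ 0 := by
      rintro rfl
      exact hone (Submodule.zero_mem _)
    have hob : o ∈ h.ball (γ - w - Pi.single i 1) := by
      have h1 : o + e ∈ h.ball (γ - w - Pi.single i 1) := fun _ j => (hp j).ge
      have h2 : e ∈ h.ball (γ - w - Pi.single i 1) :=
        h.ball_anti (sub_le_self _ (by simp)) he'
      simpa using Submodule.sub_mem _ h1 h2
    have hoj : ∀ j, j ≠ i → γ j - w j ≤ v j o := fun j hj => by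
      simpa [hj] using hob ho0 j
    have hoi : v i o = γ i - w i - 1 := by
      have h1 := hob ho0 i
      simp at h1
      by_contra hne
      refine hone fun _ j => ?_
      by_cases hj : j = i
      · subst hj; simp; omega
      · simpa using hoj j hj
    refine Set.eq_empty_iff_forall_notMem.1 hΔ (fun j => v j o)
      ⟨⟨o, ho, ho0, rfl⟩, i, by simp [hoi]; omega, fun j hj => ?_⟩
    have := hoj j hj
    simp
    omega

end Main

end RationalValuations

/-- The valuations at the maximal ideals of the integral closure of a residually rational `O`. -/
theorem RationalValuations.of_integralClosure {k O K : Type*} [Field k] [CommRing O]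
    [Algebra k O] [Field K] [Algebra O K] [Algebra k K] [IsScalarTower k O K]
    {r : ℕ} {M : Fin r → Ideal (integralClosure O K)}
    (hMmax : ∀ i, (M i).IsMaximal) (hMinj : Function.Injective M)
    {v : Fin r → K → ℤ}
    (hvmul : ∀ (i : Fin r) (x y : K), x ≠ 0 → y ≠ 0 → v i (x * y) = v i x + v i y)
    (hvadd : ∀ (i : Fin r) (x y : K), x ≠ 0 → y ≠ 0 → x + y ≠ 0 →
      min (v i x) (v i y) ≤ v i (x + y))
    (hvsurj : ∀ (i : Fin r) (n : ℤ), ∃ x : K, x ≠ 0 ∧ v i x = n)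
    (hvint : ∀ x : K, x ≠ 0 → (x ∈ integralClosure O K ↔ ∀ i, 0 ≤ v i x))
    (hvmax : ∀ (i : Fin r) (x : K) (hx : x ∈ integralClosure O K), x ≠ 0 →
      ((⟨x, hx⟩ : integralClosure O K) ∈ M i ↔ 1 ≤ v i x))
    (hres : ∀ i, Function.Surjective (algebraMap k ((integralClosure O K) ⧸ M i))) :
    RationalValuations k v := by
  have hint : ∀ c : k, algebraMap k K c ∈ integralClosure O K := fun c => by
    rw [IsScalarTower.algebraMap_apply k O K]
    exact algebraMap_mem _ _
  have hv1 : ∀ i, v i 1 = 0 := fun i => by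
    have := hvmul i 1 1 one_ne_zero one_ne_zero
    rw [mul_one] at this
    omega
  have hconst : ∀ (i : Fin r) (c : k), c ≠ 0 → v i (algebraMap k K c) = 0 := by
    intro i c hc
    have hc0 : algebraMap k K c ≠ 0 := by simpa using hc
    have hc0' : algebraMap k K c⁻¹ ≠ 0 := by simpa using hc
    have h1 := (hvint _ hc0).1 (hint c) i
    have h2 := (hvint _ hc0').1 (hint c⁻¹) i
    have h3 := hvmul i _ _ hc0 hc0'
    rw [← map_mul, mul_inv_cancel₀ hc, map_one, hv1] at h3
    omega
  have hvpow : ∀ (i : Fin r) (x : K) (m : ℕ), x ≠ 0 → v i (x ^ m) = m * v i x := by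
    intro i x m hx
    induction m with
    | zero => simp [hv1]
    | succ m ih => rw [pow_succ, hvmul i _ _ (pow_ne_zero m hx) hx, ih]; push_cast; ring
  have hsep : ∀ i, ∃ x : K, x ≠ 0 ∧ v i x = 0 ∧ ∀ j, j ≠ i → 1 ≤ v j x := by
    intro i
    have hex : ∀ j, ∃ a : integralClosure O K, a ∉ M i ∧ (j ≠ i → a ∈ M j) := by
      intro j
      by_cases hj : j = i
      · exact ⟨1, (Ideal.ne_top_iff_one _).1 (hMmax i).ne_top, fun H => absurd hj H⟩
      · obtain ⟨a, haj, hai⟩ := SetLike.not_le_iff_exists.1 fun hle : M j ≤ M i =>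
          hj (hMinj ((hMmax j).eq_of_le (hMmax i).ne_top hle))
        exact ⟨a, hai, fun _ => haj⟩
    choose a hai haj using hex
    have hp := (hMmax i).isPrime
    have hxi : ∏ j, a j ∉ M i := by
      rw [Ideal.IsPrime.prod_mem_iff]
      rintro ⟨j, -, hj⟩
      exact hai j hj
    have hx0 : ((∏ j, a j : integralClosure O K) : K) ≠ 0 := by
      intro H
      rw [ZeroMemClass.coe_eq_zero] at H
      exact hxi (H ▸ (M i).zero_mem)
    refine ⟨_, hx0, ?_, fun j hj => ?_⟩
    · have h1 := (hvint _ hx0).1 (Subtype.prop _) i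
      have h2 := (hvmax i _ (Subtype.prop _) hx0).not.1 hxi
      omega
    · refine (hvmax j _ (Subtype.prop _) hx0).1 ?_
      exact Ideal.mem_of_dvd _ (Finset.dvd_prod_of_mem a (Finset.mem_univ j)) (haj j hj)
  have happrox : ∀ (i : Fin r) (n : Fin r → ℤ) (y : K),
      ∃ x : K, x ≠ 0 ∧ v i x = 0 ∧ ∀ j, j ≠ i → n j ≤ v j x + v j y := by
    intro i n y
    obtain ⟨x, hx0, hxi, hx⟩ := hsep i
    let m := ∑ j, (n j - v j y).toNat
    refine ⟨x ^ m, pow_ne_zero _ hx0, by rw [hvpow i x m hx0, hxi, mul_zero], fun j hj => ?_⟩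
    rw [hvpow j x m hx0]
    have h1 : (n j - v j y).toNat ≤ m :=
      Finset.single_le_sum (f := fun j => (n j - v j y).toNat) (fun _ _ => Nat.zero_le _)
        (Finset.mem_univ j)
    have h2 := hx j hj
    have h3 : (m : ℤ) ≤ m * v j x := le_mul_of_one_le_right (Int.natCast_nonneg m) h2
    omega
  refine ⟨hvmul, hvadd, hconst, fun i w hw0 hwi => ?_, fun i n => ?_⟩
  · obtain ⟨s, hs0, hsi, hs⟩ := happrox i (fun j => max 0 (v j w)) w
    obtain ⟨s, hs0, hsi, hs, hsw⟩ :
        ∃ s : K, s ≠ 0 ∧ v i s = 0 ∧ s ∈ integralClosure O K ∧ s * w ∈ integralClosure O K := by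
      refine ⟨s, hs0, hsi, (hvint _ hs0).2 fun j => ?_,
        (hvint _ (mul_ne_zero hs0 hw0)).2 fun j => ?_⟩
      · by_cases hj : j = i
        · rw [hj, hsi]
        · have := hs j hj; omega
      · rw [hvmul j _ _ hs0 hw0]
        by_cases hj : j = i
        · rw [hj, hsi, hwi, add_zero]
        · have := hs j hj; omega
    have hp := (hMmax i).isPrime
    have hrep : ∀ x : integralClosure O K, ∃ c : k, x - algebraMap k _ c ∈ M i := fun x => by
      obtain ⟨c, hc⟩ := hres i (Ideal.Quotient.mk _ x)
      exact ⟨c, (Ideal.Quotient.eq).1 hc.symm⟩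
    obtain ⟨c₁, hc₁⟩ := hrep ⟨s * w, hsw⟩
    obtain ⟨c₂, hc₂⟩ := hrep ⟨s, hs⟩
    have hc₂0 : c₂ ≠ 0 := by
      rintro rfl
      rw [map_zero, sub_zero, hvmax i s hs hs0] at hc₂
      omega
    refine ⟨c₁ / c₂, fun hne => ?_⟩
    have hmem : (⟨s * w, hsw⟩ - algebraMap k _ (c₁ / c₂) * ⟨s, hs⟩ : integralClosure O K) ∈ M i := by
      have := (M i).sub_mem hc₁ ((M i).mul_mem_left (algebraMap k _ (c₁ / c₂)) hc₂)
      convert this using 1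
      rw [mul_sub, ← map_mul, div_mul_cancel₀ _ hc₂0]
      ring
    have hcoe : ((⟨s * w, hsw⟩ - algebraMap k _ (c₁ / c₂) * ⟨s, hs⟩ : integralClosure O K) : K)
        = s * (w - algebraMap k K (c₁ / c₂)) := by
      change s * w - algebraMap k K (c₁ / c₂) * s = _
      ring
    have h0 := mul_ne_zero hs0 hne
    have := (hvmax i _ (Subtype.prop _) (hcoe ▸ h0)).1 hmem
    rw [hcoe, hvmul i _ _ hs0 hne] at this
    omega
  · obtain ⟨y, hy0, hyi⟩ := hvsurj i (n i)
    obtain ⟨x, hx0, hxi, hx⟩ := happrox i n y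
    have hval : ∀ j, v j (x * y) = v j x + v j y := fun j => hvmul j x y hx0 hy0
    refine ⟨x * y, mul_ne_zero hx0 hy0, by rw [hval, hxi, hyi, zero_add], fun j => ?_⟩
    rw [hval]
    by_cases hj : j = i
    · rw [hj, hxi, hyi, zero_add]
    · exact hx j hj

theorem statement_15 (k O K : Type) [Field k] [PerfectField k]
    [Infinite k]
    [CommRing O] [IsDomain O] [IsNoetherianRing O] [IsLocalRing O] [Algebra k O]
    [Field K] [Algebra O K] [IsFractionRing O K] [Algebra k K] [IsScalarTower k O K]
    (hdim : ringKrullDim O = 1)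
    (hfin : Module.Finite O (integralClosure O K))
    (OB : Submodule O K) (hOB : OB = Subalgebra.toSubmodule (integralClosure O K))
    (r : ℕ) (M : Fin r → Ideal (integralClosure O K))
    (hMmax : ∀ i, (M i).IsMaximal)
    (hMinj : Function.Injective M)
    (hMall : ∀ P : Ideal (integralClosure O K), P.IsMaximal → ∃ i, P = M i)
    (v : Fin r → K → ℤ)
    (hvmul : ∀ (i : Fin r) (x y : K), x ≠ 0 → y ≠ 0 → v i (x * y) = v i x + v i y)
    (hvadd : ∀ (i : Fin r) (x y : K), x ≠ 0 → y ≠ 0 → x + y ≠ 0 →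
      min (v i x) (v i y) ≤ v i (x + y))
    (hvsurj : ∀ (i : Fin r) (n : ℤ), ∃ x : K, x ≠ 0 ∧ v i x = n)
    (hvint : ∀ x : K, x ≠ 0 → (x ∈ integralClosure O K ↔ ∀ i, 0 ≤ v i x))
    (hvmax : ∀ (i : Fin r) (x : K) (hx : x ∈ integralClosure O K), x ≠ 0 →
      ((⟨x, hx⟩ : integralClosure O K) ∈ M i ↔ 1 ≤ v i x))
    (d : Fin r → ℕ) (hd : ∀ i, d i = Module.finrank k ((integralClosure O K) ⧸ M i))
    (hres : ∀ i, Function.Surjective (algebraMap k ((integralClosure O K) ⧸ M i)))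
    :
    IsSymmetricSet
        {w : Fin r → ℤ | ∃ z : K, z ∈ (1 : Submodule O K) ∧ z ≠ 0 ∧ w = fun i => v i z} ↔
      ∀ a : Submodule O K, IsFracIdeal a →
        a = (1 : Submodule O K) / ((1 : Submodule O K) / a) := by
  have h := RationalValuations.of_integralClosure hMmax hMinj hvmul hvadd hvsurj hvint hvmax hres
  have : NeZero r := ⟨by
    rintro rfl
    obtain ⟨P, hP⟩ := Ideal.exists_maximal (integralClosure O K)
    exact (hMall P hP).choose.elim0⟩
  have hB : (1 : Submodule O K).restrictScalars k ≤ h.ball 0 := by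
    intro x hx hx0
    obtain ⟨o, rfl⟩ := Submodule.mem_one.1 hx
    exact (hvint _ hx0).1 (algebraMap_mem _ o)
  obtain ⟨d, hd, hdO⟩ := FractionalIdeal.isFractional_of_fg (S := nonZeroDivisors O)
    (I := Subalgebra.toSubmodule (integralClosure O K)) (Module.Finite.iff_fg.1 hfin)
  have hd0 : algebraMap O K d ≠ 0 := by simpa using nonZeroDivisors.ne_zero hd
  have hN : h.ball (fun i => v i (algebraMap O K d)) ≤ (1 : Submodule O K).restrictScalars k := by
    intro x hx
    by_cases hx0 : x = 0
    · subst hx0; exact Submodule.zero_mem _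
    have hq0 := mul_ne_zero (inv_ne_zero hd0) hx0
    obtain ⟨o, ho⟩ := hdO ((algebraMap O K d)⁻¹ * x) ((hvint _ hq0).2 fun i => by
      have : v i (algebraMap O K d) ≤ v i x := hx hx0 i
      rw [hvmul i _ _ (inv_ne_zero hd0) hx0, h.val_inv i hd0]
      omega)
    refine Submodule.mem_one.2 ⟨o, ?_⟩
    rw [ho, Algebra.smul_def, mul_inv_cancel_left₀ hd0]
  exact ⟨h.reflexive_of_isSymmetricSet hB hN, h.isSymmetricSet_of_reflexive hB hN⟩
end

section
/- Let b be a fractional ideal of O with b·Ō = Ō (so b ⊆ Ō), and let c be a canonical ideal of O normalized so that c : Ō = J^K(γ^b). Then for every v ∈ ℤ^r: deg(J^{c:b}(v)) = deg(J^b(γ^b − v)) + dim_k(Ō/b) − (d_1 v_1 + ⋯ + d_r v_r). (Proposition 4.16; here dim_k(Ō/b) = dim_k(b·Ō/b), which equals the paper's dim_k(b/(b : Ō)) when b is self-dual) -/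
/-- The length over `k` of a module over a local `k`-algebra is the product of the length of the
residue field with the length of the module. -/
theorem length_eq_length_residue_mul (k : Type*) {O : Type*} [Field k] [CommRing O] [IsLocalRing O]
    [Algebra k O] (M : Type*) [AddCommGroup M] [Module O M] [Module k M] [IsScalarTower k O M] :
    Module.length k M =
      Module.length k (O ⧸ IsLocalRing.maximalIdeal O) * Module.length O M := by
  by_cases h : Module.length O M = ⊤
  · have h1 : Module.length O M ≤ Module.length k M := by
      rw [← WithBot.coe_le_coe, Module.coe_length, Module.coe_length]
      exact Order.krullDim_le_of_strictMono (Submodule.restrictScalars k)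
        (Submodule.restrictScalarsEmbedding k O M).strictMono
    rw [h, top_le_iff] at h1
    rw [h, h1, ENat.mul_top]
    exact Module.length_pos.ne'
  · have hfin := Module.length_ne_top_iff.mp h
    clear h
    revert ‹Module k M›
    induction hfin with
    | of_subsingleton => intros; simp
    | @of_simple_quotient M _ _ N _ _ ih =>
      intro _ _
      have hk := Module.length_eq_add_of_exact (N.subtype.restrictScalars k)
        (N.mkQ.restrictScalars k) N.subtype_injective N.mkQ_surjective
        (LinearMap.exact_subtype_mkQ N)
      have hO := Module.length_eq_add_of_exact N.subtype N.mkQ N.subtype_injective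
        N.mkQ_surjective (LinearMap.exact_subtype_mkQ N)
      obtain ⟨I, hI, ⟨e⟩⟩ := isSimpleModule_iff_quot_maximal.mp ‹IsSimpleModule O (M ⧸ N)›
      obtain rfl := IsLocalRing.eq_maximalIdeal hI
      rw [hk, hO, ih, (e.restrictScalars k).length_eq, Module.length_eq_one O (M ⧸ N), mul_add,
        mul_one]

/-- The submodules of the quotient `A / B` form a lattice isomorphic to the interval `[B, A]`. -/
def submoduleQuotientIso {O K : Type*} [Ring O] [AddCommGroup K] [Module O K]
    (A B : Submodule O K) (h : B ≤ A) :
    Submodule O (A ⧸ B.comap A.subtype) ≃o Set.Icc B A :=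
  (Submodule.comapMkQRelIso (B.comap A.subtype)).trans
    { toFun := fun N => ⟨N.1.map A.subtype, by
        refine ⟨?_, Submodule.map_subtype_le _ _⟩
        have := Submodule.map_mono (f := A.subtype) N.2
        rwa [Submodule.map_comap_subtype, inf_eq_right.mpr h] at this⟩
      invFun := fun N => ⟨N.1.comap A.subtype, Submodule.comap_mono N.2.1⟩
      left_inv := fun N => Subtype.ext (Submodule.comap_map_eq_of_injective A.subtype_injective _)
      right_inv := fun N => Subtype.ext (by
        simp [Submodule.map_comap_subtype, inf_eq_right.mpr N.2.2])
      map_rel_iff' := fun {N N'} => Submodule.map_le_map_iff_of_injective A.subtype_injective _ _ }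

/-- The `k`-dimension of `A / B` only depends on the height of the interval `[B, A]`. -/
theorem qdim_congr (k : Type) {O K : Type} [Field k] [CommRing O] [IsLocalRing O] [CommRing K]
    [Algebra k O] [Algebra O K] [Algebra k K] [IsScalarTower k O K]
    {A B A' B' : Submodule O K} (h : B ≤ A) (h' : B' ≤ A')
    (hdim : Order.krullDim (Set.Icc B A) = Order.krullDim (Set.Icc B' A')) :
    qdim k A B = qdim k A' B' := by
  have key : ∀ A B : Submodule O K, qdim k A B =
      (Module.length k (O ⧸ IsLocalRing.maximalIdeal O) *
        Module.length O (A ⧸ B.comap A.subtype)).toNat := by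
    intro A B
    rw [← length_eq_length_residue_mul, Module.length_eq_rank]
    rfl
  have hlen : Module.length O (A ⧸ B.comap A.subtype) =
      Module.length O (A' ⧸ B'.comap A'.subtype) := by
    apply WithBot.coe_injective
    rw [Module.coe_length, Module.coe_length,
      Order.krullDim_eq_of_orderIso (submoduleQuotientIso A B h),
      Order.krullDim_eq_of_orderIso (submoduleQuotientIso A' B' h'), hdim]
  rw [key, key, hlen]

/-- The second isomorphism theorem for `qdim`. -/
theorem qdim_sup_eq_inf (k : Type) {O K : Type} [Field k] [CommRing O] [IsLocalRing O] [CommRing K]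
    [Algebra k O] [Algebra O K] [Algebra k K] [IsScalarTower k O K] (A B : Submodule O K) :
    qdim k (A ⊔ B) B = qdim k A (A ⊓ B) :=
  qdim_congr k le_sup_right inf_le_left
    (Order.krullDim_eq_of_orderIso (infIccOrderIsoIccSup A B)).symm

section Fractional

variable {O K : Type} [CommRing O] [Field K] [Algebra O K]

theorem isFracIdeal_iff {a : Submodule O K} :
    IsFracIdeal a ↔ a ≠ ⊥ ∧ IsFractional (nonZeroDivisors O) a := by
  refine and_congr_right fun _ => exists_congr fun x => and_congr_right fun _ =>
    forall₂_congr fun z _ => ?_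
  rw [Submodule.mem_one]
  rfl

theorem IsFracIdeal.of_le_of_le {a b x : Submodule O K} (ha : IsFracIdeal a) (hb : IsFracIdeal b)
    (hbx : b ≤ x) (hxa : x ≤ a) : IsFracIdeal x := by
  obtain ⟨y, hy, hya⟩ := ha.2
  exact ⟨fun h => hb.1 (le_bot_iff.mp (h ▸ hbx)), y, hy, fun z hz => hya z (hxa hz)⟩

theorem IsFracIdeal.sup {a b : Submodule O K} (ha : IsFracIdeal a) (hb : IsFracIdeal b) :
    IsFracIdeal (a ⊔ b) := by
  rw [isFracIdeal_iff] at *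
  exact ⟨fun h => ha.1 (le_bot_iff.mp (h ▸ le_sup_left)), ha.2.sup hb.2⟩

variable [IsDomain O] [IsFractionRing O K]

theorem IsFracIdeal.exists_algebraMap_mem {a : Submodule O K} (ha : IsFracIdeal a) :
    ∃ p : O, p ≠ 0 ∧ algebraMap O K p ∈ a := by
  obtain ⟨z, hz, hz0⟩ := Submodule.exists_mem_ne_zero_of_ne_bot ha.1
  obtain ⟨p, q, hq, rfl⟩ := IsFractionRing.div_surjective (A := O) z
  have hq0 : algebraMap O K q ≠ 0 := by
    simpa using nonZeroDivisors.ne_zero hq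
  refine ⟨p, by rintro rfl; simp at hz0, ?_⟩
  have := a.smul_mem q hz
  rwa [Algebra.smul_def, mul_div_cancel₀ _ hq0] at this

theorem IsFracIdeal.inf {a b : Submodule O K} (ha : IsFracIdeal a) (hb : IsFracIdeal b) :
    IsFracIdeal (a ⊓ b) := by
  obtain ⟨p, hp, hpa⟩ := ha.exists_algebraMap_mem
  obtain ⟨q, hq, hqb⟩ := hb.exists_algebraMap_mem
  rw [isFracIdeal_iff] at *
  refine ⟨fun h => ?_, ha.2.inf_right b⟩
  have : algebraMap O K (p * q) ∈ a ⊓ b := by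
    rw [map_mul]
    refine ⟨?_, by rw [← Algebra.smul_def]; exact b.smul_mem _ hqb⟩
    rw [mul_comm, ← Algebra.smul_def]
    exact a.smul_mem _ hpa
  rw [h, Submodule.mem_bot] at this
  simp [hp, hq] at this

theorem IsFracIdeal.div {a b : Submodule O K} (ha : IsFracIdeal a) (hb : IsFracIdeal b) :
    IsFracIdeal (a / b) := by
  obtain ⟨p, hp, hpa⟩ := ha.exists_algebraMap_mem
  obtain ⟨y, hy, hyb⟩ := hb.2
  refine isFracIdeal_iff.mpr ⟨fun h => ?_,
    (isFracIdeal_iff.mp ha).2.div_of_nonzero (isFracIdeal_iff.mp hb).2 hb.1⟩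
  have hmem : algebraMap O K (p * y) ∈ a / b := by
    rw [Submodule.mem_div_iff_forall_mul_mem]
    intro z hz
    obtain ⟨t, ht⟩ := Submodule.mem_one.mp (hyb z hz)
    rw [map_mul, mul_assoc, ← Algebra.smul_def y, ← ht, mul_comm, ← Algebra.smul_def]
    exact a.smul_mem t hpa
  rw [h, Submodule.mem_bot] at hmem
  simp [hp, nonZeroDivisors.ne_zero hy] at hmem

end Fractional

/-- `a ↦ c : a` reverses inclusions. -/
theorem div_antitone {O K : Type*} [CommRing O] [CommRing K] [Algebra O K] (c : Submodule O K) :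
    Antitone fun a : Submodule O K => c / a := fun _ _ h _ hx =>
  Submodule.mem_div_iff_forall_mul_mem.mpr fun y hy =>
    Submodule.mem_div_iff_forall_mul_mem.mp hx y (h hy)

theorem submodule_div_sup {O K : Type*} [CommRing O] [CommRing K] [Algebra O K] (c a b : Submodule O K) :
    c / (a ⊔ b) = c / a ⊓ c / b := by
  apply le_antisymm (le_inf (div_antitone c le_sup_left) (div_antitone c le_sup_right))
  rintro x ⟨hxa, hxb⟩
  rw [SetLike.mem_coe, Submodule.mem_div_iff_forall_mul_mem] at hxa hxb
  rw [Submodule.mem_div_iff_forall_mul_mem]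
  intro y hy
  obtain ⟨s, hs, t, ht, rfl⟩ := Submodule.mem_sup.mp hy
  rw [mul_add]
  exact c.add_mem (hxa s hs) (hxb t ht)

/-- `a ↦ c : a` is an order-reversing bijection between intervals of fractional ideals when `c`
is canonical. -/
def IsCanonicalIdeal.iccIso {O K : Type} [CommRing O] [IsDomain O] [Field K] [Algebra O K]
    [IsFractionRing O K] {c a b : Submodule O K} (hc : IsCanonicalIdeal c) (ha : IsFracIdeal a)
    (hb : IsFracIdeal b) : Set.Icc b a ≃o (Set.Icc (c / a) (c / b))ᵒᵈ where
  toFun x := OrderDual.toDual ⟨c / x.1, div_antitone c x.2.2, div_antitone c x.2.1⟩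
  invFun y := ⟨c / (OrderDual.ofDual y).1,
    (hc.2 b hb).trans_le (div_antitone c (OrderDual.ofDual y).2.2),
    (div_antitone c (OrderDual.ofDual y).2.1).trans_eq (hc.2 a ha).symm⟩
  left_inv x := Subtype.ext (hc.2 x.1 (ha.of_le_of_le hb x.2.1 x.2.2)).symm
  right_inv y := Subtype.ext (hc.2 _ ((hc.1.div hb).of_le_of_le (hc.1.div ha)
    (OrderDual.ofDual y).2.1 (OrderDual.ofDual y).2.2)).symm
  map_rel_iff' {x y} := by
    refine ⟨fun h => ?_, fun h => div_antitone c h⟩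
    have h' : c / (c / x.1) ≤ c / (c / y.1) := div_antitone c h
    rwa [← hc.2 x.1 (ha.of_le_of_le hb x.2.1 x.2.2),
      ← hc.2 y.1 (ha.of_le_of_le hb y.2.1 y.2.2)] at h'

section Degree

variable {k O K : Type} [Field k] [CommRing O] [IsDomain O] [IsLocalRing O] [Algebra k O]
  [Field K] [Algebra O K] [IsFractionRing O K] [Algebra k K] [IsScalarTower k O K]

theorem IsCanonicalIdeal.qdim_div {c a b : Submodule O K} (hc : IsCanonicalIdeal c)
    (ha : IsFracIdeal a) (hb : IsFracIdeal b) (h : b ≤ a) :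
    qdim k (c / b) (c / a) = qdim k a b :=
  qdim_congr k (div_antitone c h) h <| by
    rw [Order.krullDim_eq_of_orderIso (hc.iccIso ha hb), Order.krullDim_orderDual]

theorem deg_sup_add_deg_inf {deg : Submodule O K → ℤ}
    (hdeg : ∀ a b : Submodule O K, IsFracIdeal a → IsFracIdeal b → b ≤ a →
      deg a - deg b = qdim k a b)
    {a b : Submodule O K} (ha : IsFracIdeal a) (hb : IsFracIdeal b) :
    deg (a ⊔ b) + deg (a ⊓ b) = deg a + deg b := by
  have h1 := hdeg _ _ (ha.sup hb) hb le_sup_right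
  have h2 := hdeg _ _ ha (ha.inf hb) inf_le_left
  rw [qdim_sup_eq_inf] at h1
  linarith

/-- `deg (c : a) + deg a` does not depend on the fractional ideal `a`. -/
theorem IsCanonicalIdeal.deg_div_add_deg {deg : Submodule O K → ℤ}
    (hdeg : ∀ a b : Submodule O K, IsFracIdeal a → IsFracIdeal b → b ≤ a →
      deg a - deg b = qdim k a b)
    {c a b : Submodule O K} (hc : IsCanonicalIdeal c)
    (ha : IsFracIdeal a) (hb : IsFracIdeal b) :
    deg (c / a) + deg a = deg (c / b) + deg b := by
  have key : ∀ {a b : Submodule O K}, IsFracIdeal a → IsFracIdeal b → b ≤ a →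
      deg (c / a) + deg a = deg (c / b) + deg b := by
    intro a b ha hb h
    have h1 := hdeg a b ha hb h
    have h2 := hdeg _ _ (hc.1.div hb) (hc.1.div ha) (div_antitone c h)
    rw [hc.qdim_div ha hb h] at h2
    linarith
  rw [← key (ha.sup hb) ha le_sup_left, key (ha.sup hb) hb le_sup_right]

end Degree

/-- The family `v` of discrete valuations attached to the maximal ideals `M i` of a subring `B`
of the field `K`. -/
structure IsValuationFamily {O K : Type} [CommRing O] [Field K] [Algebra O K] {r : ℕ}
    (B : Subalgebra O K) (M : Fin r → Ideal B) (v : Fin r → K → ℤ) : Prop where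
  isMaximal : ∀ i, (M i).IsMaximal
  injective : Function.Injective M
  map_mul : ∀ (i : Fin r) (x y : K), x ≠ 0 → y ≠ 0 → v i (x * y) = v i x + v i y
  map_add : ∀ (i : Fin r) (x y : K), x ≠ 0 → y ≠ 0 → x + y ≠ 0 →
      min (v i x) (v i y) ≤ v i (x + y)
  surjective : ∀ (i : Fin r) (n : ℤ), ∃ x : K, x ≠ 0 ∧ v i x = n
  mem_iff : ∀ x : K, x ≠ 0 → (x ∈ B ↔ ∀ i, 0 ≤ v i x)
  mem_ideal_iff : ∀ (i : Fin r) (x : K) (hx : x ∈ B), x ≠ 0 →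
      ((⟨x, hx⟩ : B) ∈ M i ↔ 1 ≤ v i x)

namespace IsValuationFamily

variable {O K : Type} [CommRing O] [Field K] [Algebra O K] {r : ℕ}
  {B : Subalgebra O K} {M : Fin r → Ideal B} {v : Fin r → K → ℤ}

/-- A valuation of the family, as a homomorphism on the unit group. -/
def unitsHom (h : IsValuationFamily B M v) (i : Fin r) : Kˣ →* Multiplicative ℤ :=
  MonoidHom.mk' (fun x => Multiplicative.ofAdd (v i x)) fun x y => by
    rw [Units.val_mul, h.map_mul i _ _ x.ne_zero y.ne_zero, ofAdd_add]

theorem map_one (h : IsValuationFamily B M v) (i : Fin r) : v i 1 = 0 :=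
  _root_.map_one (h.unitsHom i)

theorem map_neg (h : IsValuationFamily B M v) (i : Fin r) {x : K} (hx : x ≠ 0) :
    v i (-x) = v i x := by
  have h1 := h.map_mul i (-1) (-1) (by simp) (by simp)
  rw [neg_mul_neg, mul_one, h.map_one] at h1
  have h2 := h.map_mul i (-1) x (by simp) hx
  rw [neg_one_mul] at h2
  omega

theorem map_inv (h : IsValuationFamily B M v) (i : Fin r) {x : K} (hx : x ≠ 0) :
    v i x⁻¹ = -v i x := by
  have h1 := h.map_mul i x x⁻¹ hx (inv_ne_zero hx)
  rw [mul_inv_cancel₀ hx, h.map_one] at h1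
  omega

theorem map_pow (h : IsValuationFamily B M v) (i : Fin r) {x : K} (hx : x ≠ 0) (n : ℕ) :
    v i (x ^ n) = n * v i x := by
  induction n with
  | zero => simp [h.map_one]
  | succ n ih =>
    rw [pow_succ, h.map_mul i _ _ (pow_ne_zero n hx) hx, ih]
    push_cast
    ring

theorem add_ne_zero_of_lt (h : IsValuationFamily B M v) (i : Fin r) {x y : K} (hx : x ≠ 0)
    (hlt : v i x < v i y) : x + y ≠ 0 := by
  intro h0
  rw [← neg_eq_of_add_eq_zero_right h0, h.map_neg i hx] at hlt
  exact lt_irrefl _ hlt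

theorem map_add_eq_of_lt (h : IsValuationFamily B M v) (i : Fin r) {x y : K} (hx : x ≠ 0)
    (hy : y ≠ 0) (hlt : v i x < v i y) : v i (x + y) = v i x := by
  have hxy := h.add_ne_zero_of_lt i hx hlt
  have h1 := h.map_add i x y hx hy hxy
  have h2 := h.map_add i (x + y) (-y) hxy (neg_ne_zero.mpr hy) (by simpa using hx)
  rw [h.map_neg i hy, add_neg_cancel_right] at h2
  omega

/-- There is an element of value one at `i` and zero at all the other indices. -/
theorem exists_uniformizer (h : IsValuationFamily B M v) (i : Fin r) :
    ∃ t : K, t ≠ 0 ∧ v i t = 1 ∧ ∀ j, j ≠ i → v j t = 0 := by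
  obtain ⟨y, hy0, hy⟩ := h.surjective i 1
  have htop : M i ⊔ ⨅ j ∈ Finset.univ.erase i, M j = ⊤ :=
    Ideal.sup_iInf_eq_top fun j hj =>
      (h.isMaximal i).coprime_of_ne (h.isMaximal j) fun hij =>
        (Finset.mem_erase.mp hj).1 (h.injective hij).symm
  have h1 : (1 : B) ∈ M i ⊔ ⨅ j ∈ Finset.univ.erase i, M j := htop ▸ Submodule.mem_top
  obtain ⟨f, hf, e, he, hfe⟩ := Submodule.mem_sup.mp h1
  simp only [Submodule.mem_iInf, Finset.mem_erase, Finset.mem_univ, and_true] at he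
  have hei : e ∉ M i := fun hei =>
    (h.isMaximal i).ne_top ((Ideal.eq_top_iff_one _).mpr (hfe ▸ (M i).add_mem hf hei))
  have hfj : ∀ j, j ≠ i → f ∉ M j := fun j hj hfj =>
    (h.isMaximal j).ne_top ((Ideal.eq_top_iff_one _).mpr (hfe ▸ (M j).add_mem hfj (he j hj)))
  by_cases hf0 : f = 0
  · exact ⟨y, hy0, hy, fun j hj => absurd (hf0 ▸ (M j).zero_mem) (hfj j hj)⟩
  have he0 : e ≠ 0 := fun h0 => hei (h0 ▸ (M i).zero_mem)
  have hf0' : (f : K) ≠ 0 := by simpa using hf0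
  have he0' : (e : K) ≠ 0 := by simpa using he0
  have hvei : v i e = 0 := by
    have := (h.mem_iff e he0').mp e.2 i
    have := (h.mem_ideal_iff i e e.2 he0').not.mp hei
    omega
  have hvej : ∀ j, j ≠ i → 1 ≤ v j e := fun j hj => (h.mem_ideal_iff j e e.2 he0').mp (he j hj)
  have hvfi : 1 ≤ v i f := (h.mem_ideal_iff i f f.2 hf0').mp hf
  have hvfj : ∀ j, j ≠ i → v j f = 0 := fun j hj => by
    have := (h.mem_iff f hf0').mp f.2 j
    have := (h.mem_ideal_iff j f f.2 hf0').not.mp (hfj j hj)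
    omega
  obtain ⟨N, hN⟩ : ∃ N : ℕ, ∀ j, 1 ≤ (N : ℤ) + v j y := by
    refine ⟨1 + ∑ j, (v j y).natAbs, fun j => ?_⟩
    have := Finset.single_le_sum (f := fun j => (v j y).natAbs) (fun _ _ => Nat.zero_le _)
      (Finset.mem_univ j)
    omega
  have hx0 : (e : K) ^ N * y ≠ 0 := mul_ne_zero (pow_ne_zero N he0') hy0
  have hg0 : (f : K) ^ 2 ≠ 0 := pow_ne_zero 2 hf0'
  have hvx : ∀ j, v j ((e : K) ^ N * y) = N * v j e + v j y := fun j => by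
    rw [h.map_mul j _ _ (pow_ne_zero N he0') hy0, h.map_pow j he0']
  have hvg : ∀ j, v j ((f : K) ^ 2) = 2 * v j f := fun j => h.map_pow j hf0' 2
  have hlt : v i ((e : K) ^ N * y) < v i ((f : K) ^ 2) := by
    rw [hvx, hvg, hvei, hy]
    omega
  refine ⟨_, h.add_ne_zero_of_lt i hx0 hlt, ?_, fun j hj => ?_⟩
  · rw [h.map_add_eq_of_lt i hx0 hg0 hlt, hvx, hvei, hy]
    simp
  · rw [add_comm, h.map_add_eq_of_lt j hg0 hx0, hvg, hvfj j hj, mul_zero]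
    rw [hvg, hvx, hvfj j hj]
    nlinarith [hN j, hvej j hj]

/-- Every vector of integers is the value vector of an element. -/
theorem exists_map_eq (h : IsValuationFamily B M v) (u : Fin r → ℤ) :
    ∃ x : K, x ≠ 0 ∧ ∀ i, v i x = u i := by
  choose t ht0 ht ht' using h.exists_uniformizer
  let x : Kˣ := ∏ j, (Units.mk0 (t j) (ht0 j)) ^ u j
  refine ⟨x, x.ne_zero, fun i => ?_⟩
  have hx : h.unitsHom i x = ∏ j, (h.unitsHom i (Units.mk0 (t j) (ht0 j))) ^ u j := by
    simp only [x, map_prod, map_zpow]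
  have hx' : v i x = ∑ j, u j * v i (t j) := by
    have := congrArg Multiplicative.toAdd hx
    simpa [toAdd_prod, toAdd_zpow, unitsHom] using this
  rw [hx', Finset.sum_eq_single i, ht, mul_one]
  · intro j _ hj
    rw [ht' j i hj.symm, mul_zero]
  · simp

/-- The fractional ideals cut out by a valuation vector are principal over `B`. -/
theorem mul_mem_iff (h : IsValuationFamily B M v) {T : (Fin r → ℤ) → Submodule O K}
    (hT : ∀ u z, z ∈ T u ↔ z = 0 ∨ ∀ i, u i ≤ v i z) {x : K} (hx : x ≠ 0) (u : Fin r → ℤ)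
    (hxu : ∀ i, v i x = u i) (w : Fin r → ℤ) (z : K) : x * z ∈ T (u + w) ↔ z ∈ T w := by
  by_cases hz : z = 0
  · simp [hz]
  simp [hT, hx, hz, h.map_mul _ _ _ hx hz, hxu]

theorem mem_zero_iff (h : IsValuationFamily B M v) {T : (Fin r → ℤ) → Submodule O K}
    (hT : ∀ u z, z ∈ T u ↔ z = 0 ∨ ∀ i, u i ≤ v i z) (z : K) : z ∈ T 0 ↔ z ∈ B := by
  by_cases hz : z = 0
  · simp [hz, B.zero_mem]
  · simp [hT, hz, h.mem_iff z hz]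

theorem isFracIdeal [IsDomain O] [IsFractionRing O K] (h : IsValuationFamily B M v)
    {T : (Fin r → ℤ) → Submodule O K} (hT : ∀ u z, z ∈ T u ↔ z = 0 ∨ ∀ i, u i ≤ v i z)
    (hB : Module.Finite O B) (u : Fin r → ℤ) : IsFracIdeal (T u) := by
  obtain ⟨x, hx0, hx⟩ := h.exists_map_eq u
  have hfg : (Subalgebra.toSubmodule B).FG := Module.Finite.iff_fg.mp hB
  have hTu : T u = Submodule.span O {x} * Subalgebra.toSubmodule B := by
    ext z
    rw [Submodule.mem_span_singleton_mul]
    constructor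
    · intro hz
      refine ⟨x⁻¹ * z, ?_, mul_inv_cancel_left₀ hx0 z⟩
      rw [Subalgebra.mem_toSubmodule, ← h.mem_zero_iff hT, ← h.mul_mem_iff hT hx0 u hx,
        mul_inv_cancel_left₀ hx0, add_zero]
      exact hz
    · rintro ⟨y, hy, rfl⟩
      rw [Subalgebra.mem_toSubmodule, ← h.mem_zero_iff hT, ← h.mul_mem_iff hT hx0 u hx,
        add_zero] at hy
      exact hy
  rw [isFracIdeal_iff]
  refine ⟨fun hbot => hx0 ?_, ?_⟩
  · rw [← Submodule.mem_bot O, ← hbot, hT]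
    exact Or.inr fun i => (hx i).ge
  · rw [hTu]
    exact FractionalIdeal.isFractional_of_fg ((Submodule.fg_span_singleton x).mul hfg)

theorem qdim_add_single (k : Type) [Field k] [Algebra k O] [Algebra k K] [IsScalarTower k O K]
    (h : IsValuationFamily B M v) {T : (Fin r → ℤ) → Submodule O K}
    (hT : ∀ u z, z ∈ T u ↔ z = 0 ∨ ∀ i, u i ≤ v i z) (u : Fin r → ℤ) (i : Fin r) :
    qdim k (T u) (T (u + Pi.single i 1)) = Module.finrank k (B ⧸ M i) := by
  obtain ⟨x, hx0, hx⟩ := h.exists_map_eq u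
  have hmem : ∀ z : B, x * z ∈ T u := fun z => by
    have := (h.mul_mem_iff hT hx0 u hx 0 z).mpr ((h.mem_zero_iff hT z).mpr z.2)
    rwa [add_zero] at this
  let P : Submodule k ((T u).restrictScalars k) :=
    ((T (u + Pi.single i 1)).restrictScalars k).comap ((T u).restrictScalars k).subtype
  let φ : B →ₗ[k] ((T u).restrictScalars k) :=
    { toFun := fun z => ⟨x * z, hmem z⟩
      map_add' := fun y z => Subtype.ext (by simp [mul_add])
      map_smul' := fun c z => Subtype.ext (by simp) }
  have hφ : Function.Surjective φ := fun z => by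
    have hz : x⁻¹ * z.1 ∈ B := by
      rw [← h.mem_zero_iff hT, ← h.mul_mem_iff hT hx0 u hx, mul_inv_cancel_left₀ hx0, add_zero]
      exact z.2
    exact ⟨⟨_, hz⟩, Subtype.ext (mul_inv_cancel_left₀ hx0 z.1)⟩
  have hker : LinearMap.ker (P.mkQ ∘ₗ φ) = (M i).restrictScalars k := by
    ext z
    rw [LinearMap.mem_ker, LinearMap.comp_apply, Submodule.mkQ_apply,
      Submodule.Quotient.mk_eq_zero]
    change x * (z : K) ∈ T (u + Pi.single i 1) ↔ z ∈ M i
    rw [h.mul_mem_iff hT hx0 u hx, hT]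
    by_cases hz : z = 0
    · simp [hz]
    have hz' : (z : K) ≠ 0 := by simpa using hz
    rw [show z ∈ M i ↔ 1 ≤ v i z from h.mem_ideal_iff i z z.2 hz']
    refine ⟨fun H => by simpa using H.resolve_left hz' i, fun H => Or.inr fun j => ?_⟩
    by_cases hj : j = i
    · subst hj; simpa using H
    · simpa [hj] using (h.mem_iff z hz').mp z.2 j
  have e : (B ⧸ (M i).restrictScalars k) ≃ₗ[k] (((T u).restrictScalars k) ⧸ P) :=
    (Submodule.quotEquivOfEq _ _ hker.symm).trans
      (LinearMap.quotKerEquivOfSurjective _ (P.mkQ_surjective.comp hφ))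
  exact (e.symm.trans (Submodule.Quotient.restrictScalarsEquiv k (M i))).finrank_eq

end IsValuationFamily

/-- A function on `ℤ^ι` that is periodic in every coordinate direction is constant. -/
theorem eq_apply_zero_of_periodic_single {ι α : Type*} [Fintype ι] [DecidableEq ι]
    {f : (ι → ℤ) → α} (hf : ∀ i, Function.Periodic f (Pi.single i 1)) (u : ι → ℤ) :
    f u = f 0 := by
  have key : ∀ s : Finset ι, f (∑ i ∈ s, u i • Pi.single i 1) = f 0 := by
    intro s
    induction s using Finset.induction_on with
    | empty => simp
    | insert i s hi ih => rw [Finset.sum_insert hi, add_comm, (hf i).zsmul, ih]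
  rw [← key Finset.univ]
  congr 1
  ext j
  simp [Finset.sum_apply, Pi.single_apply]

theorem statement_17 (k O K : Type) [Field k] [PerfectField k]
    [CommRing O] [IsDomain O] [IsNoetherianRing O] [IsLocalRing O] [Algebra k O]
    [Field K] [Algebra O K] [IsFractionRing O K] [Algebra k K] [IsScalarTower k O K]
    (hdim : ringKrullDim O = 1)
    (hfin : Module.Finite O (integralClosure O K))
    (OB : Submodule O K) (hOB : OB = Subalgebra.toSubmodule (integralClosure O K))
    (r : ℕ) (M : Fin r → Ideal (integralClosure O K))
    (hMmax : ∀ i, (M i).IsMaximal)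
    (hMinj : Function.Injective M)
    (hMall : ∀ P : Ideal (integralClosure O K), P.IsMaximal → ∃ i, P = M i)
    (v : Fin r → K → ℤ)
    (hvmul : ∀ (i : Fin r) (x y : K), x ≠ 0 → y ≠ 0 → v i (x * y) = v i x + v i y)
    (hvadd : ∀ (i : Fin r) (x y : K), x ≠ 0 → y ≠ 0 → x + y ≠ 0 →
      min (v i x) (v i y) ≤ v i (x + y))
    (hvsurj : ∀ (i : Fin r) (n : ℤ), ∃ x : K, x ≠ 0 ∧ v i x = n)
    (hvint : ∀ x : K, x ≠ 0 → (x ∈ integralClosure O K ↔ ∀ i, 0 ≤ v i x))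
    (hvmax : ∀ (i : Fin r) (x : K) (hx : x ∈ integralClosure O K), x ≠ 0 →
      ((⟨x, hx⟩ : integralClosure O K) ∈ M i ↔ 1 ≤ v i x))
    (d : Fin r → ℕ) (hd : ∀ i, d i = Module.finrank k ((integralClosure O K) ⧸ M i))
    (J : Submodule O K → (Fin r → ℤ) → Submodule O K)
    (hJ : ∀ (a : Submodule O K) (w : Fin r → ℤ) (z : K),
      z ∈ J a w ↔ z ∈ a ∧ (z = 0 ∨ ∀ i, w i ≤ v i z))
    (deg : Submodule O K → ℤ)
    (hdeg0 : deg 1 = 0)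
    (hdegd : ∀ a b : Submodule O K, IsFracIdeal a → IsFracIdeal b → b ≤ a →
      deg a - deg b = qdim k a b)
    (b : Submodule O K) (hb : IsFracIdeal b) (hbO : b * OB = OB)
    (γb : Fin r → ℤ) (hγb : γb = gammaB v OB b)
    (c : Submodule O K) (hc : IsCanonicalIdeal c) (hcO : c / OB = J (⊤ : Submodule O K) γb) :
    ∀ w : Fin r → ℤ,
      deg (J (c / b) w) = deg (J b (γb - w)) + (qdim k OB b : ℤ) - ∑ i, (d i : ℤ) * w i := by
  intro w
  classical
  have h : IsValuationFamily (integralClosure O K) M v :=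
    ⟨hMmax, hMinj, hvmul, hvadd, hvsurj, hvint, hvmax⟩
  have hT : ∀ u z, z ∈ J ⊤ u ↔ z = 0 ∨ ∀ i, u i ≤ v i z := fun u z => by simp [hJ]
  have hTfrac := h.isFracIdeal hT hfin
  have hOBT : OB = J ⊤ 0 := by
    ext z
    rw [hOB, Subalgebra.mem_toSubmodule, h.mem_zero_iff hT]
  have hinf : ∀ a u, J a u = a ⊓ J ⊤ u := fun a u => by
    ext z
    rw [Submodule.mem_inf, hJ, hT]
  have hOBfrac : IsFracIdeal OB := hOBT ▸ hTfrac 0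
  have hbOB : b ≤ OB := fun z hz => by
    have h1 : (1 : K) ∈ OB := by
      rw [hOB]
      exact one_mem (integralClosure O K)
    rw [← hbO, ← mul_one z]
    exact Submodule.mul_mem_mul hz h1
  have hdegT : ∀ u, deg (J ⊤ u) + ∑ i, (d i : ℤ) * u i = deg OB := by
    intro u
    have hper : ∀ i, Function.Periodic
        (fun u : Fin r → ℤ => deg (J ⊤ u) + ∑ i, (d i : ℤ) * u i) (Pi.single i 1) := by
      intro i u
      have hle : J ⊤ (u + Pi.single i 1) ≤ J ⊤ u := fun z hz => by
        rw [hT] at hz ⊢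
        refine hz.imp_right fun H j => le_trans ?_ (H j)
        by_cases hj : j = i <;> simp [hj]
      have h1 := hdegd _ _ (hTfrac u) (hTfrac (u + Pi.single i 1)) hle
      rw [h.qdim_add_single k hT, ← hd] at h1
      simp only [Pi.add_apply, mul_add, Finset.sum_add_distrib, Pi.single_apply, mul_ite, mul_one,
        mul_zero, Finset.sum_ite_eq', Finset.mem_univ, if_true]
      linarith
    have h0 := eq_apply_zero_of_periodic_single hper u
    simpa [← hOBT] using h0
  have hdiv : ∀ u, c / J ⊤ u = J ⊤ (γb - u) := by
    intro u
    obtain ⟨x, hx0, hx⟩ := h.exists_map_eq u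
    ext z
    rw [← h.mul_mem_iff hT hx0 u hx, add_sub_cancel, ← hcO, Submodule.mem_div_iff_forall_mul_mem,
      Submodule.mem_div_iff_forall_mul_mem]
    constructor
    · intro H y hy
      have hxy := (h.mul_mem_iff hT hx0 u hx 0 y).mpr (hOBT ▸ hy)
      rw [add_zero] at hxy
      simpa only [mul_comm, mul_left_comm] using H _ hxy
    · intro H y hy
      have hy' : x⁻¹ * y ∈ OB := by
        rw [hOBT, ← h.mul_mem_iff hT hx0 u hx, mul_inv_cancel_left₀ hx0, add_zero]
        exact hy
      have := H _ hy'
      rwa [mul_assoc, mul_left_comm, mul_inv_cancel_left₀ hx0] at this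
  have hJw : J (c / b) w = c / (b ⊔ J ⊤ (γb - w)) := by
    rw [submodule_div_sup, hdiv, sub_sub_cancel, ← hinf]
  have h1 := hc.deg_div_add_deg hdegd (hb.sup (hTfrac (γb - w))) hOBfrac
  have h2 := deg_sup_add_deg_inf hdegd hb (hTfrac (γb - w))
  have h3 := hdegd OB b hOBfrac hb hbOB
  have h4 := hdegT γb
  have h5 := hdegT (γb - w)
  rw [← hJw, hcO] at h1
  rw [← hinf] at h2
  simp only [Pi.sub_apply, mul_sub, Finset.sum_sub_distrib] at h5
  linarith
end

section
/- Let b be a fractional ideal of O and let c be a canonical ideal of O normalized so that c : Ō = J^K(γ^b). Then for every v ∈ ℤ^r: c^{c:b}(v) = d − c^b(γ^b − v − 1). (Proposition 5.7) -/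
section Length

variable {O V : Type*} [CommRing O] [AddCommGroup V] [Module O V]

/-- The length of the quotient `A / B` of two submodules (of `A / (A ⊓ B)` in general). -/
noncomputable def quotLength (A B : Submodule O V) : ℕ∞ :=
  Module.length O (A ⧸ B.submoduleOf A)

/-- Submodules of `A / B` correspond to submodules between `B` and `A`. -/
noncomputable def submoduleQuotientOrderIsoIcc {A B : Submodule O V} (h : B ≤ A) :
    Submodule O (A ⧸ B.submoduleOf A) ≃o Set.Icc B A where
  toFun P := ⟨(P.comap (B.submoduleOf A).mkQ).map A.subtype, by
    constructor
    · intro x hx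
      refine ⟨⟨x, h hx⟩, ?_, rfl⟩
      have : (B.submoduleOf A).mkQ ⟨x, h hx⟩ = 0 :=
        (Submodule.Quotient.mk_eq_zero _).2 hx
      simp only [SetLike.mem_coe, Submodule.mem_comap, this, zero_mem]
    · exact Submodule.map_subtype_le _ _⟩
  invFun N := (N.1.submoduleOf A).map (B.submoduleOf A).mkQ
  left_inv P := by
    change (Submodule.comap A.subtype (Submodule.map A.subtype _)).map _ = P
    rw [Submodule.comap_map_eq_of_injective A.injective_subtype,
      Submodule.map_comap_eq_of_surjective (Submodule.mkQ_surjective _)]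
  right_inv N := by
    apply Subtype.ext
    change Submodule.map A.subtype (Submodule.comap _ (Submodule.map _ _)) = N.1
    rw [Submodule.comap_map_mkQ, sup_eq_right.2 (Submodule.comap_mono N.2.1)]
    exact (Submodule.map_comap_subtype _ _).trans (inf_eq_right.2 N.2.2)
  map_rel_iff' {P Q} := by
    change Submodule.map A.subtype _ ≤ Submodule.map A.subtype _ ↔ _
    rw [Submodule.map_le_map_iff_of_injective A.injective_subtype,
      Submodule.comap_le_comap_iff_of_surjective (Submodule.mkQ_surjective _)]

lemma coe_quotLength {A B : Submodule O V} (h : B ≤ A) :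
    (quotLength A B : WithBot ℕ∞) = Order.krullDim (Set.Icc B A) := by
  rw [quotLength, Module.coe_length,
    Order.krullDim_eq_of_orderIso (submoduleQuotientOrderIsoIcc h)]

/-- Length of `E / F` splits into the contribution of `b` and that of the complement. -/
lemma quotLength_eq_add (b : Submodule O V) {E F : Submodule O V} (h : F ≤ E) :
    quotLength E F = quotLength (b ⊓ E) (b ⊓ F) + quotLength (b ⊔ E) (b ⊔ F) := by
  let f : (↥(b ⊓ E) ⧸ (b ⊓ F).submoduleOf (b ⊓ E)) →ₗ[O] (E ⧸ F.submoduleOf E) :=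
    Submodule.mapQ _ _ (Submodule.inclusion inf_le_right) (fun _ hx => hx.2)
  let g : (E ⧸ F.submoduleOf E) →ₗ[O] (↥(b ⊔ E) ⧸ (b ⊔ F).submoduleOf (b ⊔ E)) :=
    Submodule.mapQ _ _ (Submodule.inclusion le_sup_right)
      (fun x hx => (le_sup_right : F ≤ b ⊔ F) hx)
  refine Module.length_eq_add_of_exact f g ?_ ?_ ?_
  · rw [← LinearMap.ker_eq_bot, LinearMap.ker_eq_bot']
    intro m
    induction m using Submodule.Quotient.induction_on with
    | H x =>
      intro hx
      exact (Submodule.Quotient.mk_eq_zero _).2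
        ⟨x.2.1, (Submodule.Quotient.mk_eq_zero (F.submoduleOf E)).1 hx⟩
  · intro m
    induction m using Submodule.Quotient.induction_on with
    | H x =>
      obtain ⟨x, hx⟩ := x
      obtain ⟨y, hy, e, he, rfl⟩ := Submodule.mem_sup.1 hx
      refine ⟨Submodule.Quotient.mk ⟨e, he⟩, (Submodule.Quotient.eq _).2 ?_⟩
      change e - (y + e) ∈ b ⊔ F
      rw [sub_add_cancel_right]
      exact neg_mem (Submodule.mem_sup_left hy)
  · intro m
    induction m using Submodule.Quotient.induction_on with
    | H x =>
      obtain ⟨x, hx⟩ := x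
      constructor
      · intro h0
        have h1 : x ∈ b ⊔ F := (Submodule.Quotient.mk_eq_zero
          ((b ⊔ F).submoduleOf (b ⊔ E))).1 h0
        obtain ⟨y, hy, z, hz, rfl⟩ := Submodule.mem_sup.1 h1
        refine ⟨Submodule.Quotient.mk ⟨y, hy, ?_⟩, (Submodule.Quotient.eq _).2 ?_⟩
        · simpa using sub_mem hx (h hz)
        · change y - (y + z) ∈ F
          rw [sub_add_cancel_left]
          exact neg_mem hz
      · rintro ⟨n, hn⟩
        rw [← hn]
        induction n using Submodule.Quotient.induction_on with
        | H y => exact (Submodule.Quotient.mk_eq_zero _).2 (Submodule.mem_sup_left y.2.1)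

end Length

section Residue

variable {k O : Type*} [Field k] [CommRing O] [IsLocalRing O] [Algebra k O]
  {V : Type*} [AddCommGroup V] [Module O V]

/-- For a module killed by the maximal ideal, the dimension over a ground field is the length
times the degree of the residue field. -/
lemma finrank_eq_finrank_residue_mul_length [Module k V] [IsScalarTower k O V]
    (h : Module.IsTorsionBySet O V (IsLocalRing.maximalIdeal O)) :
    Module.finrank k V = Module.finrank k (O ⧸ IsLocalRing.maximalIdeal O) *
      (Module.length O V).toNat := by
  let _ := Ideal.Quotient.field (IsLocalRing.maximalIdeal O)
  let _ := h.module
  have : IsScalarTower k (O ⧸ IsLocalRing.maximalIdeal O) V := h.isScalarTower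
  have : IsScalarTower O (O ⧸ IsLocalRing.maximalIdeal O) V := h.isScalarTower
  rw [Module.length_eq_of_surjective (R := O ⧸ IsLocalRing.maximalIdeal O)
    Ideal.Quotient.mk_surjective, Module.length_eq_rank,
    ← Module.finrank_mul_finrank k (O ⧸ IsLocalRing.maximalIdeal O) V]
  simp [Module.finrank]

lemma length_ne_top_of_isTorsionBySet [Module.Finite O V]
    (h : Module.IsTorsionBySet O V (IsLocalRing.maximalIdeal O)) :
    Module.length O V ≠ ⊤ := by
  let _ := Ideal.Quotient.field (IsLocalRing.maximalIdeal O)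
  let _ := h.module
  have : IsScalarTower O (O ⧸ IsLocalRing.maximalIdeal O) V := h.isScalarTower
  have : Module.Finite (O ⧸ IsLocalRing.maximalIdeal O) V :=
    Module.Finite.of_restrictScalars_finite O _ _
  rw [Module.length_eq_of_surjective (R := O ⧸ IsLocalRing.maximalIdeal O)
    Ideal.Quotient.mk_surjective, Module.length_eq_finrank]
  exact ENat.natCast_ne_top _

end Residue

lemma qdim_eq_finrank_residue_mul_quotLength (k : Type) {O K : Type} [Field k] [CommRing O]
    [IsLocalRing O] [CommRing K] [Algebra k O] [Algebra O K] [Algebra k K] [IsScalarTower k O K]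
    {A B : Submodule O K}
    (h : ∀ x ∈ IsLocalRing.maximalIdeal O, ∀ z ∈ A, x • z ∈ B) :
    qdim k A B = Module.finrank k (O ⧸ IsLocalRing.maximalIdeal O) *
      (quotLength A B).toNat := by
  rw [quotLength, ← finrank_eq_finrank_residue_mul_length (k := k)]
  · exact (Submodule.Quotient.restrictScalarsEquiv k (B.submoduleOf A)).finrank_eq
  · rintro m ⟨x, hx⟩
    induction m using Submodule.Quotient.induction_on with
    | H z => exact (Submodule.Quotient.mk_eq_zero _).2 (h x hx z z.2)

section FractionalIdeals

variable {O K : Type} [CommRing O] [Field K] [Algebra O K]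

lemma IsFracIdeal.mono {A B : Submodule O K} (hB : IsFracIdeal B) (hA : A ≠ ⊥) (h : A ≤ B) :
    IsFracIdeal A :=
  ⟨hA, hB.2.imp fun _ hx => ⟨hx.1, fun z hz => hx.2 z (h hz)⟩⟩

lemma IsFracIdeal.sup_s19 {A B : Submodule O K} (hA : IsFracIdeal A) (hB : IsFracIdeal B) :
    IsFracIdeal (A ⊔ B) := by
  obtain ⟨x, hx, hxA⟩ := hA.2
  obtain ⟨y, hy, hyB⟩ := hB.2
  refine ⟨fun h => hA.1 (sup_eq_bot_iff.1 h).1, x * y, mul_mem hx hy, fun z hz => ?_⟩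
  obtain ⟨a, ha, b, hb, rfl⟩ := Submodule.mem_sup.1 hz
  rw [smul_add]
  refine add_mem ?_ ?_
  · rw [mul_comm, mul_smul]
    exact Submodule.smul_mem _ _ (hxA a ha)
  · rw [mul_smul]
    exact Submodule.smul_mem _ _ (hyB b hb)

lemma Submodule.div_le_div_left {A B : Submodule O K} (C : Submodule O K) (h : B ≤ A) :
    C / A ≤ C / B := fun _ hz =>
  Submodule.mem_div_iff_forall_mul_mem.2 fun y hy =>
    Submodule.mem_div_iff_forall_mul_mem.1 hz y (h hy)

lemma Submodule.div_sup_eq_inf (C A B : Submodule O K) : C / (A ⊔ B) = C / A ⊓ C / B := by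
  refine le_antisymm (le_inf (Submodule.div_le_div_left C le_sup_left)
    (Submodule.div_le_div_left C le_sup_right)) fun z hz => ?_
  rw [Submodule.mem_div_iff_forall_mul_mem]
  intro y hy
  obtain ⟨a, ha, b, hb, rfl⟩ := Submodule.mem_sup.1 hy
  rw [mul_add]
  exact add_mem (Submodule.mem_div_iff_forall_mul_mem.1 hz.1 a ha)
    (Submodule.mem_div_iff_forall_mul_mem.1 hz.2 b hb)

variable [IsDomain O] [IsFractionRing O K]

lemma IsFracIdeal.of_mul_mem {A B : Submodule O K} (hB : IsFracIdeal B) (hA : A ≠ ⊥)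
    {y : K} (hy : y ≠ 0) (h : ∀ z ∈ A, y * z ∈ B) : IsFracIdeal A := by
  obtain ⟨x, hx, hxB⟩ := hB.2
  obtain ⟨p, q, hq, rfl⟩ := IsFractionRing.div_surjective (A := O) y
  have hq0 : algebraMap O K q ≠ 0 := IsFractionRing.to_map_ne_zero_of_mem_nonZeroDivisors hq
  have hp : p ≠ 0 := by
    rintro rfl
    simp at hy
  refine ⟨hA, x * p, mul_mem hx (mem_nonZeroDivisors_of_ne_zero hp), fun z hz => ?_⟩
  have h1 := Submodule.smul_mem _ q (hxB _ (h z hz))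
  convert h1 using 1
  simp only [Algebra.smul_def, map_mul]
  field_simp

lemma IsFracIdeal.div_s19 {A C : Submodule O K} (hC : IsFracIdeal C) (hA : IsFracIdeal A) :
    IsFracIdeal (C / A) := by
  obtain ⟨x, hx, hxA⟩ := hA.2
  obtain ⟨a, ha, ha0⟩ := Submodule.exists_mem_ne_zero_of_ne_bot hA.1
  obtain ⟨y, hy, hy0⟩ := Submodule.exists_mem_ne_zero_of_ne_bot hC.1
  refine hC.of_mul_mem (y := a) ?_ ha0 fun z hz => ?_
  · refine Submodule.ne_bot_iff _ |>.2 ⟨algebraMap O K x * y, ?_, mul_ne_zero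
      (IsFractionRing.to_map_ne_zero_of_mem_nonZeroDivisors hx) hy0⟩
    rw [Submodule.mem_div_iff_forall_mul_mem]
    intro z hz
    obtain ⟨t, ht⟩ := Submodule.mem_one.1 (hxA z hz)
    rw [mul_right_comm, ← Algebra.smul_def, ← ht, ← Algebra.smul_def]
    exact Submodule.smul_mem _ _ hy
  · rw [mul_comm]
    exact Submodule.mem_div_iff_forall_mul_mem.1 hz a ha

/-- Duality with respect to a canonical ideal reverses the interval between two fractional
ideals. -/
def IsCanonicalIdeal.orderIsoIcc {A B C : Submodule O K} (hC : IsCanonicalIdeal C)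
    (hA : IsFracIdeal A) (hB : IsFracIdeal B) :
    Set.Icc B A ≃o (Set.Icc (C / A) (C / B))ᵒᵈ :=
  have hN {A B N : Submodule O K} (hA : IsFracIdeal A) (hB : IsFracIdeal B)
      (h : N ∈ Set.Icc B A) : IsFracIdeal N := hA.mono (fun h0 => hB.1 (le_bot_iff.1 (h0 ▸ h.1))) h.2
  { toFun := fun N => OrderDual.toDual
      ⟨C / N.1, Submodule.div_le_div_left C N.2.2, Submodule.div_le_div_left C N.2.1⟩
    invFun := fun N => ⟨C / (OrderDual.ofDual N).1,
      (hC.2 B hB).trans_le (Submodule.div_le_div_left C (OrderDual.ofDual N).2.2),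
      (Submodule.div_le_div_left C (OrderDual.ofDual N).2.1).trans_eq (hC.2 A hA).symm⟩
    left_inv := fun N => Subtype.ext (hC.2 N.1 (hN hA hB N.2)).symm
    right_inv := fun N => congrArg OrderDual.toDual (Subtype.ext (hC.2 (OrderDual.ofDual N).1
      (hN (hC.1.div_s19 hB) (hC.1.div_s19 hA) (OrderDual.ofDual N).2)).symm)
    map_rel_iff' := fun {N P} => by
      change C / P.1 ≤ C / N.1 ↔ N.1 ≤ P.1
      refine ⟨fun h => ?_, fun h => Submodule.div_le_div_left C h⟩
      rw [hC.2 N.1 (hN hA hB N.2), hC.2 P.1 (hN hA hB P.2)]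
      exact Submodule.div_le_div_left C h }

lemma IsCanonicalIdeal.quotLength_div {A B C : Submodule O K} (hC : IsCanonicalIdeal C)
    (hA : IsFracIdeal A) (hB : IsFracIdeal B) (h : B ≤ A) :
    quotLength (C / B) (C / A) = quotLength A B := by
  apply WithBot.coe_injective
  rw [coe_quotLength h, coe_quotLength (Submodule.div_le_div_left C h),
    Order.krullDim_eq_of_orderIso (hC.orderIsoIcc hA hB), Order.krullDim_orderDual]

end FractionalIdeals

section Valuation

variable {K : Type*} [Field K]

/-- The elements of value at least `n`, for a function `ν` satisfying the axioms of a discrete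
valuation away from zero. -/
def valuationAddSubgroup (ν : K → ℤ)
    (hmul : ∀ x y : K, x ≠ 0 → y ≠ 0 → ν (x * y) = ν x + ν y)
    (hadd : ∀ x y : K, x ≠ 0 → y ≠ 0 → x + y ≠ 0 → min (ν x) (ν y) ≤ ν (x + y))
    (n : ℤ) : AddSubgroup K where
  carrier := {z | z = 0 ∨ n ≤ ν z}
  zero_mem' := Or.inl rfl
  add_mem' {x y} hx hy := by
    by_cases hx0 : x = 0
    · simpa [hx0] using hy
    by_cases hy0 : y = 0
    · simpa [hy0] using hx
    by_cases hxy : x + y = 0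
    · exact Or.inl hxy
    · exact Or.inr ((le_min (hx.resolve_left hx0) (hy.resolve_left hy0)).trans
        (hadd x y hx0 hy0 hxy))
  neg_mem' {x} hx := by
    by_cases hx0 : x = 0
    · exact Or.inl (by simp [hx0])
    have h1 := hmul 1 1 one_ne_zero one_ne_zero
    have h2 := hmul (-1) (-1) (by simp) (by simp)
    have h3 := hmul (-1) x (by simp) hx0
    rw [neg_one_mul] at h3
    simp only [mul_one, neg_mul_neg] at h1 h2
    have := hx.resolve_left hx0
    exact Or.inr (by lia)

lemma val_pow {ν : K → ℤ} (hmul : ∀ x y : K, x ≠ 0 → y ≠ 0 → ν (x * y) = ν x + ν y)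
    {x : K} (hx : x ≠ 0) (n : ℕ) : ν (x ^ n) = n * ν x := by
  induction n with
  | zero =>
    have := hmul 1 1 one_ne_zero one_ne_zero
    simp only [mul_one] at this
    simp only [pow_zero, Nat.cast_zero, zero_mul]
    lia
  | succ n ih =>
    rw [pow_succ, hmul _ _ (pow_ne_zero n hx) hx, ih]
    push_cast
    ring

/-- Weak approximation: all values can be prescribed simultaneously as soon as there are
elements separating the valuations. -/
lemma exists_forall_val_eq {ι : Type*} [Fintype ι] {v : ι → K → ℤ}
    (hmul : ∀ (i : ι) (x y : K), x ≠ 0 → y ≠ 0 → v i (x * y) = v i x + v i y)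
    (hadd : ∀ (i : ι) (x y : K), x ≠ 0 → y ≠ 0 → x + y ≠ 0 →
      min (v i x) (v i y) ≤ v i (x + y))
    (hsurj : ∀ (i : ι) (n : ℤ), ∃ x : K, x ≠ 0 ∧ v i x = n)
    {y : ι → K} (hy0 : ∀ i, y i ≠ 0) (hy : ∀ i, v i (y i) = 0)
    (hy' : ∀ i j, j ≠ i → 1 ≤ v j (y i)) (w : ι → ℤ) :
    ∃ x : K, x ≠ 0 ∧ ∀ i, v i x = w i := by
  classical
  cases isEmpty_or_nonempty ι with
  | inl _ => exact ⟨1, one_ne_zero, isEmptyElim⟩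
  | inr _ =>
  choose s hs0 hs using fun i => hsurj i (w i)
  obtain ⟨B, hB⟩ := (Set.finite_range fun p : ι × ι => w p.2 + 1 - v p.2 (s p.1)).bddAbove
  have hN (i j : ι) : w j + 1 - v j (s i) ≤ B.toNat :=
    (hB ⟨(i, j), rfl⟩).trans (Int.self_le_toNat B)
  have ht0 (i : ι) : s i * y i ^ B.toNat ≠ 0 := mul_ne_zero (hs0 i) (pow_ne_zero _ (hy0 i))
  have ht (i j : ι) : v j (s i * y i ^ B.toNat) = v j (s i) + B.toNat * v j (y i) := by
    rw [hmul j _ _ (hs0 i) (pow_ne_zero _ (hy0 i)), val_pow (hmul j) (hy0 i)]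
  have key (i : ι) : (∑ j, s j * y j ^ B.toNat) ≠ 0 ∧
      v i (∑ j, s j * y j ^ B.toNat) = w i := by
    let G := valuationAddSubgroup (v i) (hmul i) (hadd i)
    have hrest : ∑ j ∈ Finset.univ.erase i, s j * y j ^ B.toNat ∈ G (w i + 1) := by
      refine sum_mem fun j hj => Or.inr ?_
      rw [ht]
      have h1 := hy' j i (Finset.ne_of_mem_erase hj).symm
      have h2 := hN j i
      nlinarith [Int.natCast_nonneg B.toNat]
    have hsplit := Finset.add_sum_erase Finset.univ (fun j => s j * y j ^ B.toNat)
      (Finset.mem_univ i)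
    have hval : v i (s i * y i ^ B.toNat) = w i := by rw [ht, hy, hs, mul_zero, add_zero]
    have hnot : (∑ j, s j * y j ^ B.toNat) ∉ G (w i + 1) := by
      intro hmem
      have : s i * y i ^ B.toNat ∈ G (w i + 1) := by
        rw [← hsplit] at hmem
        exact (AddSubgroup.add_mem_cancel_right _ hrest).1 hmem
      have := this.resolve_left (ht0 i)
      lia
    have hmem : (∑ j, s j * y j ^ B.toNat) ∈ G (w i) := by
      rw [← hsplit]
      exact add_mem (Or.inr hval.ge) (hrest.imp_right fun h => by lia)
    have h0 : (∑ j, s j * y j ^ B.toNat) ≠ 0 := fun h => hnot (Or.inl h)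
    refine ⟨h0, le_antisymm ?_ (hmem.resolve_left h0)⟩
    by_contra! h
    exact hnot (Or.inr h)
  exact ⟨_, (key (Classical.arbitrary ι)).1, fun i => (key i).2⟩

end Valuation

lemma exists_mem_forall_ne_notMem {R ι : Type*} [CommRing R] [Fintype ι] {M : ι → Ideal R}
    (hM : ∀ i, (M i).IsMaximal) (hinj : Function.Injective M) (i : ι) :
    ∃ y, y ∉ M i ∧ ∀ j, j ≠ i → y ∈ M j := by
  classical
  have h : ¬ (Finset.univ.erase i).inf M ≤ M i := by
    rw [(hM i).isPrime.inf_le']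
    rintro ⟨j, hj, hji⟩
    exact Finset.ne_of_mem_erase hj (hinj ((hM j).eq_of_le (hM i).ne_top hji))
  obtain ⟨y, hy, hyi⟩ := SetLike.not_le_iff_exists.1 h
  exact ⟨y, hyi, fun j hj => Submodule.mem_finsetInf.1 hy j (by simp [hj])⟩

lemma isTorsionBySet_quotient_of_isMaximal {O S : Type*} [CommRing O] [IsLocalRing O]
    [CommRing S] [Algebra O S] [Algebra.IsIntegral O S] (P : Ideal S) [P.IsMaximal] :
    Module.IsTorsionBySet O (S ⧸ P) (IsLocalRing.maximalIdeal O) := by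
  rintro m ⟨x, hx⟩
  rw [← IsLocalRing.eq_maximalIdeal (Ideal.isMaximal_comap_of_isIntegral_of_isMaximal
    (R := O) P)] at hx
  have hx' : algebraMap O S x ∈ P := hx
  change x • m = 0
  rw [Algebra.smul_def, IsScalarTower.algebraMap_apply O S (S ⧸ P),
    Ideal.Quotient.algebraMap_eq, Ideal.Quotient.eq_zero_iff_mem.2 hx', zero_mul]

/-- `E / F` is the product of the residue rings when `E = x S` and `F = x ⋂ M i`. -/
lemma quotLength_eq_sum_length_quotient {O K ι : Type*} [CommRing O] [Field K] [Algebra O K]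
    [Fintype ι] {S : Subalgebra O K} {M : ι → Ideal S} (hM : ∀ i, (M i).IsMaximal)
    (hinj : Function.Injective M) {E F : Submodule O K} {x : K} (hx : x ≠ 0)
    (hE : ∀ z, z * x ∈ E ↔ z ∈ S) (hF : ∀ z : S, (z : K) * x ∈ F ↔ ∀ i, z ∈ M i) :
    quotLength E F = ∑ i, Module.length O (S ⧸ M i) := by
  have hEx (z : E) : (z : K) * x⁻¹ ∈ S := by
    rw [← hE, inv_mul_cancel_right₀ hx]
    exact z.2
  let f : E →ₗ[O] ((i : ι) → S ⧸ M i) :=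
    { toFun := fun z i => Ideal.Quotient.mk (M i) ⟨z * x⁻¹, hEx z⟩
      map_add' := fun z z' => funext fun i => congrArg (Ideal.Quotient.mk (M i))
        (Subtype.ext (add_mul (z : K) z' x⁻¹))
      map_smul' := fun a z => funext fun i => congrArg (Ideal.Quotient.mk (M i))
        (Subtype.ext (smul_mul_assoc a (z : K) x⁻¹)) }
  have hf : Function.Surjective f := by
    intro g
    obtain ⟨t, ht⟩ := Ideal.pi_quotient_surjective (I := M)
      (fun i j hij => Ideal.isCoprime_of_isMaximal (hinj.ne hij)) g
    refine ⟨⟨t * x, (hE t).2 t.2⟩, funext fun i => ?_⟩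
    rw [← ht i]
    exact congrArg (Ideal.Quotient.mk (M i)) (Subtype.ext (mul_inv_cancel_right₀ hx (t : K)))
  have hker : LinearMap.ker f = F.submoduleOf E := by
    ext z
    rw [LinearMap.mem_ker, funext_iff]
    change (∀ i, Ideal.Quotient.mk (M i) ⟨z * x⁻¹, hEx z⟩ = 0) ↔ (z : K) ∈ F
    simp only [Ideal.Quotient.eq_zero_iff_mem, ← hF, inv_mul_cancel_right₀ hx]
  rw [quotLength, ← hker, (f.quotKerEquivOfSurjective hf).length_eq,
    Module.length_pi_of_fintype]

theorem statement_19 (k O K : Type) [Field k] [PerfectField k]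
    [CommRing O] [IsDomain O] [IsNoetherianRing O] [IsLocalRing O] [Algebra k O]
    [Field K] [Algebra O K] [IsFractionRing O K] [Algebra k K] [IsScalarTower k O K]
    (hdim : ringKrullDim O = 1)
    (hfin : Module.Finite O (integralClosure O K))
    (OB : Submodule O K) (hOB : OB = Subalgebra.toSubmodule (integralClosure O K))
    (r : ℕ) (M : Fin r → Ideal (integralClosure O K))
    (hMmax : ∀ i, (M i).IsMaximal)
    (hMinj : Function.Injective M)
    (hMall : ∀ P : Ideal (integralClosure O K), P.IsMaximal → ∃ i, P = M i)
    (v : Fin r → K → ℤ)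
    (hvmul : ∀ (i : Fin r) (x y : K), x ≠ 0 → y ≠ 0 → v i (x * y) = v i x + v i y)
    (hvadd : ∀ (i : Fin r) (x y : K), x ≠ 0 → y ≠ 0 → x + y ≠ 0 →
      min (v i x) (v i y) ≤ v i (x + y))
    (hvsurj : ∀ (i : Fin r) (n : ℤ), ∃ x : K, x ≠ 0 ∧ v i x = n)
    (hvint : ∀ x : K, x ≠ 0 → (x ∈ integralClosure O K ↔ ∀ i, 0 ≤ v i x))
    (hvmax : ∀ (i : Fin r) (x : K) (hx : x ∈ integralClosure O K), x ≠ 0 →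
      ((⟨x, hx⟩ : integralClosure O K) ∈ M i ↔ 1 ≤ v i x))
    (d : Fin r → ℕ) (hd : ∀ i, d i = Module.finrank k ((integralClosure O K) ⧸ M i))
    (J : Submodule O K → (Fin r → ℤ) → Submodule O K)
    (hJ : ∀ (a : Submodule O K) (w : Fin r → ℤ) (z : K),
      z ∈ J a w ↔ z ∈ a ∧ (z = 0 ∨ ∀ i, w i ≤ v i z))
    (b : Submodule O K) (hb : IsFracIdeal b)
    (γb : Fin r → ℤ) (hγb : γb = gammaB v OB b)
    (c : Submodule O K) (hc : IsCanonicalIdeal c) (hcO : c / OB = J (⊤ : Submodule O K) γb) :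
    ∀ w : Fin r → ℤ,
      (qdim k (J (c / b) w) (J (c / b) (w + 1)) : ℤ) =
        (∑ i, (d i : ℤ)) - (qdim k (J b (γb - w - 1)) (J b ((γb - w - 1) + 1)) : ℤ) := by
  subst hOB
  have hsep (i : Fin r) : ∃ y : K, y ≠ 0 ∧ v i y = 0 ∧ ∀ j, j ≠ i → 1 ≤ v j y := by
    obtain ⟨y, hyi, hyj⟩ := exists_mem_forall_ne_notMem hMmax hMinj i
    have hy0 : (y : K) ≠ 0 := fun h => hyi (by
      rw [show y = 0 from Subtype.ext h]
      exact zero_mem _)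
    refine ⟨y, hy0, le_antisymm ?_ ((hvint y hy0).1 y.2 i), fun j hj =>
      (hvmax j y y.2 hy0).1 (hyj j hj)⟩
    by_contra! h
    exact hyi ((hvmax i y y.2 hy0).2 h)
  choose y hy0 hyi hyj using hsep
  have hex := exists_forall_val_eq hvmul hvadd hvsurj hy0 hyi hyj
  let E : (Fin r → ℤ) → Submodule O K := J ⊤
  have hE (u : Fin r → ℤ) (z : K) : z ∈ E u ↔ z = 0 ∨ ∀ i, u i ≤ v i z := by
    simp [E, hJ]
  have hJE (a : Submodule O K) (u : Fin r → ℤ) : J a u = a ⊓ E u := by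
    ext z
    rw [hJ, Submodule.mem_inf, hE]
  have hEmul {u u' : Fin r → ℤ} {x : K} (hx0 : x ≠ 0) (hx : ∀ i, v i x = u i) (z : K) :
      z * x ∈ E (u' + u) ↔ z ∈ E u' := by
    by_cases hz : z = 0
    · simp [hz]
    · simp only [hE, mul_eq_zero, hz, hx0, false_or, hvmul _ z x hz hx0, hx, Pi.add_apply,
        add_le_add_iff_right]
  have hE0 (z : K) : z ∈ E 0 ↔ z ∈ integralClosure O K := by
    by_cases hz : z = 0
    · simp [hz]
    · simp [hE, hz, hvint z hz]
  have hE1 (z : integralClosure O K) : (z : K) ∈ E 1 ↔ ∀ i, z ∈ M i := by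
    by_cases hz : (z : K) = 0
    · simp [show z = 0 from Subtype.ext hz]
    · simp [hE, hz, hvmax _ _ z.2 hz]
  have hle (u : Fin r → ℤ) : E (u + 1) ≤ E u := fun z hz =>
    (hE u z).2 (((hE _ z).1 hz).imp_right fun h i => (lt_of_lt_of_le (lt_add_one (u i)) (h i)).le)
  have htors (u : Fin r → ℤ) : ∀ x ∈ IsLocalRing.maximalIdeal O, ∀ z ∈ E u,
      x • z ∈ E (u + 1) := by
    intro x hx z hz
    have hx1 : algebraMap O K x ∈ E 1 := by
      refine (hE1 (algebraMap O (integralClosure O K) x)).2 fun i => ?_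
      have := hMmax i
      rw [← IsLocalRing.eq_maximalIdeal (Ideal.isMaximal_comap_of_isIntegral_of_isMaximal
        (R := O) (M i))] at hx
      exact hx
    rw [Algebra.smul_def]
    by_cases h0 : algebraMap O K x * z = 0
    · simp [h0]
    obtain ⟨hx0, hz0⟩ := mul_ne_zero_iff.1 h0
    refine (hE _ _).2 (Or.inr fun i => ?_)
    rw [hvmul i _ _ hx0 hz0, Pi.add_apply, add_comm]
    exact add_le_add (((hE _ _).1 hx1).resolve_left hx0 i)
      (((hE _ _).1 hz).resolve_left hz0 i)
  have hEfrac (u : Fin r → ℤ) : IsFracIdeal (E u) := by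
    obtain ⟨x, hx0, hx⟩ := hex u
    have hOB : IsFracIdeal (Subalgebra.toSubmodule (integralClosure O K)) := by
      refine ⟨Submodule.ne_bot_iff _ |>.2 ⟨1, (integralClosure O K).one_mem, one_ne_zero⟩, ?_⟩
      obtain ⟨a, ha, h⟩ := FractionalIdeal.isFractional_of_fg (S := nonZeroDivisors O)
        ((Module.Finite.iff_fg
          (N := Subalgebra.toSubmodule (integralClosure O K))).1 hfin)
      refine ⟨a, ha, fun z hz => ?_⟩
      obtain ⟨t, ht⟩ := h z hz
      exact Submodule.mem_one.2 ⟨t, ht⟩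
    refine hOB.of_mul_mem (y := x⁻¹) (Submodule.ne_bot_iff _ |>.2 ⟨x, ?_, hx0⟩)
      (inv_ne_zero hx0) fun z hz => ?_
    · exact (hE u x).2 (Or.inr fun i => (hx i).ge)
    · rw [Subalgebra.mem_toSubmodule, ← hE0, ← hEmul hx0 hx, zero_add, mul_comm,
        mul_inv_cancel_left₀ hx0]
      exact hz
  have hdiv (u : Fin r → ℤ) : c / E (γb - u) = E u := by
    obtain ⟨x, hx0, hx⟩ := hex (γb - u)
    ext z
    rw [← hEmul hx0 hx, add_sub_cancel, show E γb = _ from hcO.symm,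
      Submodule.mem_div_iff_forall_mul_mem, Submodule.mem_div_iff_forall_mul_mem]
    constructor
    · intro h t ht
      rw [mul_assoc, mul_comm x]
      refine h _ ?_
      rw [← zero_add (γb - u), hEmul hx0 hx, hE0]
      exact ht
    · intro h t ht
      have := h (t * x⁻¹) (by
        rw [Subalgebra.mem_toSubmodule, ← hE0, ← hEmul hx0 hx, zero_add,
          inv_mul_cancel_right₀ hx0]
        exact ht)
      rwa [mul_assoc, mul_comm t, mul_inv_cancel_left₀ hx0] at this
  have hJdiv (u : Fin r → ℤ) : J (c / b) u = c / (b ⊔ E (γb - u)) := by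
    rw [hJE, Submodule.div_sup_eq_inf, hdiv]
  have hMtors (i : Fin r) := have := hMmax i
    isTorsionBySet_quotient_of_isMaximal (O := O) (M i)
  have hlen (u : Fin r → ℤ) : quotLength (E u) (E (u + 1)) =
      ∑ i, Module.length O (integralClosure O K ⧸ M i) := by
    obtain ⟨x, hx0, hx⟩ := hex u
    refine quotLength_eq_sum_length_quotient hMmax hMinj hx0 (fun z => ?_) fun z => ?_
    · rw [← zero_add u, hEmul hx0 hx, hE0]
    · rw [add_comm u, hEmul hx0 hx, hE1]
  have hlen_ne (i : Fin r) : Module.length O (integralClosure O K ⧸ M i) ≠ ⊤ :=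
    length_ne_top_of_isTorsionBySet (hMtors i)
  intro w
  set u := γb - w - 1 with hu
  have hw : γb - w = u + 1 := by simp [hu]
  have hw1 : γb - (w + 1) = u := by simp [hu, sub_sub]
  have hdim_dual : qdim k (J (c / b) w) (J (c / b) (w + 1)) =
      Module.finrank k (O ⧸ IsLocalRing.maximalIdeal O) *
        (quotLength (b ⊔ E u) (b ⊔ E (u + 1))).toNat := by
    rw [← hc.quotLength_div (hb.sup_s19 (hEfrac u)) (hb.sup_s19 (hEfrac (u + 1)))
      (sup_le_sup_left (hle u) b), ← hw, ← hJdiv, ← hw1, ← hJdiv]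
    refine qdim_eq_finrank_residue_mul_quotLength k fun x hx z hz => ?_
    rw [hJE] at hz ⊢
    exact ⟨Submodule.smul_mem _ _ hz.1, htors w x hx z hz.2⟩
  have hdim_b : qdim k (J b u) (J b (u + 1)) =
      Module.finrank k (O ⧸ IsLocalRing.maximalIdeal O) *
        (quotLength (b ⊓ E u) (b ⊓ E (u + 1))).toNat := by
    rw [hJE, hJE]
    exact qdim_eq_finrank_residue_mul_quotLength k fun x hx z hz =>
      ⟨Submodule.smul_mem _ _ hz.1, htors u x hx z hz.2⟩
  have hsum : ∑ i, d i = Module.finrank k (O ⧸ IsLocalRing.maximalIdeal O) *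
      (quotLength (E u) (E (u + 1))).toNat := by
    rw [hlen, ENat.toNat_sum fun i _ => hlen_ne i, Finset.mul_sum]
    refine Finset.sum_congr rfl fun i _ => ?_
    rw [hd, finrank_eq_finrank_residue_mul_length (hMtors i)]
  have hadd := quotLength_eq_add b (hle u)
  have htop : quotLength (E u) (E (u + 1)) ≠ ⊤ := by
    rw [hlen]
    exact ENat.sum_ne_top.2 fun i _ => hlen_ne i
  rw [hadd] at htop
  obtain ⟨h1, h2⟩ := WithTop.add_ne_top.1 htop
  rw [hadd, ENat.toNat_add h1 h2, mul_add, ← hdim_b, ← hdim_dual] at hsum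
  rw [← Nat.cast_sum, hsum]
  push_cast
  ring
end
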